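/- arXiv:1902.02139 — 3 statements merged into one kernel-verified Lean document; each statement's English description precedes it below -/
import Mathlib

section
/- Let A = (Q, Σ, Δ, Q₀, F) be a nondeterministic Büchi automaton with Q₀ ≠ ∅, and let B be any transition-based deterministic parity automaton obtained from the Muller-Schupp construction for A. Then L(B) = L(A), i.e., B accepts exactly the infinite words accepted by A. -/
/-! Core definitions: NBA, TDPA, ranked slices, and the unified
determinization construction. -/

universe u v

/-- A nondeterministic Büchi automaton over state type `Q` and alphabet `Alp`. -/
structure NBA (Q : Type u) (Alp : Type v) where
  delta : Q → Alp → Set Q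
  Q0 : Set Q
  F : Set Q

namespace NBA

variable {Q : Type u} {Alp : Type v}

/-- `Δ(X, x)`: successors of a set of states. -/
def nextSet (A : NBA Q Alp) (X : Set Q) (x : Alp) : Set Q := ⋃ q ∈ X, A.delta q x

/-- A run of the NBA on the word `w`. -/
def IsRun (A : NBA Q Alp) (w : ℕ → Alp) (q : ℕ → Q) : Prop :=
  q 0 ∈ A.Q0 ∧ ∀ i, q (i + 1) ∈ A.delta (q i) (w i)

/-- Acceptance: some run visits `F` infinitely often. -/
def Accepts (A : NBA Q Alp) (w : ℕ → Alp) : Prop :=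
  ∃ q, A.IsRun w q ∧ ∀ N, ∃ i, N ≤ i ∧ q i ∈ A.F

end NBA

/-- A transition-based deterministic parity automaton. -/
structure TDPA (P : Type u) (Alp : Type v) where
  delta : P → Alp → P
  p0 : P
  c : P → Alp → ℕ

namespace TDPA

variable {P : Type u} {Alp : Type v}

/-- The unique run of the TDPA on `w`. -/
def run (B : TDPA P Alp) (w : ℕ → Alp) : ℕ → P
  | 0 => B.p0
  | i + 1 => B.delta (B.run w i) (w i)

/-- Acceptance: the minimum priority occurring infinitely often on the run is even. -/
def Accepts (B : TDPA P Alp) (w : ℕ → Alp) : Prop :=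
  ∃ m, (∀ N, ∃ i, N ≤ i ∧ B.c (B.run w i) (w i) = m) ∧
    (∀ m', (∀ N, ∃ i, N ≤ i ∧ B.c (B.run w i) (w i) = m') → m ≤ m') ∧ Even m

/-- Reachability from the initial state. -/
def Reachable (B : TDPA P Alp) (p : P) : Prop :=
  ∃ l : List Alp, l.foldl B.delta B.p0 = p

end TDPA

/-- A (ranked) slice: a tuple `S 1, …, S n` of subsets of `Q` together with a
ranking function `rk`.  Only the values on `{1, …, n}` are relevant. -/
structure Slice (Q : Type u) where
  n : ℕ
  S : ℕ → Set Q
  rk : ℕ → ℕ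

namespace Slice

variable {Q : Type u}

/-- A valid ranked slice: the sets are nonempty and pairwise disjoint, the ranking is a
bijection of `{1,…,n}` and the last set has rank `1`. -/
def Valid (s : Slice Q) : Prop :=
  (∀ i ∈ Set.Icc 1 s.n, (s.S i).Nonempty) ∧
  (∀ i ∈ Set.Icc 1 s.n, ∀ j ∈ Set.Icc 1 s.n, i ≠ j → Disjoint (s.S i) (s.S j)) ∧
  Set.BijOn s.rk (Set.Icc 1 s.n) (Set.Icc 1 s.n) ∧
  (1 ≤ s.n → s.rk s.n = 1)

/-- `Q_t`: union of all sets of the slice. -/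
def states (s : Slice Q) : Set Q := ⋃ i ∈ Set.Icc 1 s.n, s.S i

/-- `idx q`: the (unique) index of the set containing `q`. -/
noncomputable def idx (s : Slice Q) (q : Q) : ℕ :=
  sInf {i | 1 ≤ i ∧ i ≤ s.n ∧ q ∈ s.S i}

end Slice

variable {Q : Type u} {Alp : Type v}

/-- `Δ_t(q, x)`: successors of `q` not reachable from a set strictly to the left. -/
noncomputable def dT (A : NBA Q Alp) (s : Slice Q) (q : Q) (x : Alp) : Set Q :=
  A.delta q x \ A.nextSet (⋃ i ∈ Set.Ico 1 (s.idx q), s.S i) x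

/-- `Δ_t(X, x)` for a set `X`. -/
noncomputable def dTs (A : NBA Q Alp) (s : Slice Q) (X : Set Q) (x : Alp) : Set Q :=
  ⋃ q ∈ X, dT A s q x

/-- The sets `Ŝ_j` of the step stage: odd positions are left (accepting) children, even
positions right (non-accepting) children. -/
noncomputable def hatS (A : NBA Q Alp) (s : Slice Q) (x : Alp) (j : ℕ) : Set Q :=
  if j % 2 = 1 then dTs A s (s.S ((j + 1) / 2)) x ∩ A.F
  else dTs A s (s.S (j / 2)) x \ A.F

/-- The ranking `α̂` of the step stage. -/
def hatRk (s : Slice Q) (j : ℕ) : ℕ :=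
  if j % 2 = 1 then s.n + 1 else s.rk (j / 2)

/-- The prune stage: `xs 1 < … < xs nt` enumerates the indices of the nonempty sets
among `Ŝ_1, …, Ŝ_{2n}`, and `xs (nt+1) = 2n + 1`. -/
def IsPrune (A : NBA Q Alp) (s : Slice Q) (x : Alp) (nt : ℕ) (xs : ℕ → ℕ) : Prop :=
  StrictMonoOn xs (Set.Icc 1 nt) ∧
  (∀ i ∈ Set.Icc 1 nt, xs i ∈ Set.Icc 1 (2 * s.n) ∧ (hatS A s x (xs i)).Nonempty) ∧
  (∀ j ∈ Set.Icc 1 (2 * s.n), (hatS A s x j).Nonempty → ∃ i ∈ Set.Icc 1 nt, xs i = j) ∧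
  xs (nt + 1) = 2 * s.n + 1

/-- The ranking `α̃` after prune: `α̃ i = min {α̂ j | xs i ≤ j < xs (i+1)}`. -/
noncomputable def tildeRk (s : Slice Q) (xs : ℕ → ℕ) (i : ℕ) : ℕ :=
  sInf (hatRk s '' {j | xs i ≤ j ∧ j < xs (i + 1)})

/-- The green ranks: ranks in the image of `α̃` that mark an empty set after step. -/
def greenSet (A : NBA Q Alp) (s : Slice Q) (x : Alp) (nt : ℕ) (xs : ℕ → ℕ) : Set ℕ :=
  {r | (∃ i ∈ Set.Icc 1 nt, tildeRk s xs i = r) ∧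
    ∃ j ∈ Set.Icc 1 (2 * s.n), hatS A s x j = ∅ ∧ hatRk s j = r}

/-- The red ranks: ranks in the image of `α̂` but not of `α̃`. -/
def redSet (s : Slice Q) (nt : ℕ) (xs : ℕ → ℕ) : Set ℕ :=
  {r | (∃ j ∈ Set.Icc 1 (2 * s.n), hatRk s j = r) ∧ ¬ ∃ i ∈ Set.Icc 1 nt, tildeRk s xs i = r}

open Classical in
/-- The dominating rank: the minimum of the active ranks `G ∪ R`, or `|Q| + 1` if there
is no active rank. -/
noncomputable def domRank (G R : Set ℕ) (card : ℕ) : ℕ :=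
  if (G ∪ R).Nonempty then sInf (G ∪ R) else card + 1

/-- A partition of `{1,…,nt}` into consecutive intervals, described by its boundaries:
the `j`-th interval is `Icc (b (j-1) + 1) (b j)`. -/
def IsIntervalPartition (nt n' : ℕ) (b : ℕ → ℕ) : Prop :=
  b 0 = 0 ∧ b n' = nt ∧ StrictMonoOn b (Set.Icc 0 n')

/-- The merge constraints: intervals containing a rank `< k` are singletons, and an index
carrying rank `k` is the maximum of its interval. -/
def MergeConstraints (n' : ℕ) (b : ℕ → ℕ) (aT : ℕ → ℕ) (k : ℕ) : Prop :=
  ∀ j ∈ Set.Icc 1 n', ∀ l ∈ Set.Icc (b (j - 1) + 1) (b j),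
    (aT l < k → b j = b (j - 1) + 1) ∧ (aT l = k → l = b j)

/-- A full transition of the (unified) construction, via prune data `(nt, xs)` and the
merge partition `(n', b)`. -/
noncomputable def TransVia [Fintype Q] (A : NBA Q Alp) (s : Slice Q) (x : Alp)
    (s' : Slice Q) (pr : ℕ) (nt : ℕ) (xs : ℕ → ℕ) (n' : ℕ) (b : ℕ → ℕ) : Prop :=
  IsPrune A s x nt xs ∧
  IsIntervalPartition nt n' b ∧
  MergeConstraints n' b (tildeRk s xs)
    (domRank (greenSet A s x nt xs) (redSet s nt xs) (Fintype.card Q)) ∧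
  ((domRank (greenSet A s x nt xs) (redSet s nt xs) (Fintype.card Q) ∈ greenSet A s x nt xs ∧
      pr = 2 * domRank (greenSet A s x nt xs) (redSet s nt xs) (Fintype.card Q)) ∨
   (domRank (greenSet A s x nt xs) (redSet s nt xs) (Fintype.card Q) ∉ greenSet A s x nt xs ∧
      pr = 2 * domRank (greenSet A s x nt xs) (redSet s nt xs) (Fintype.card Q) - 1)) ∧
  s'.n = n' ∧
  (∀ i ∈ Set.Icc 1 n', s'.S i = ⋃ j ∈ Set.Icc (b (i - 1) + 1) (b i), hatS A s x (xs j)) ∧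
  s'.Valid ∧
  (∀ i ∈ Set.Icc 1 n', ∀ j ∈ Set.Icc 1 n',
    sInf (tildeRk s xs '' Set.Icc (b (i - 1) + 1) (b i)) <
      sInf (tildeRk s xs '' Set.Icc (b (j - 1) + 1) (b j)) → s'.rk i < s'.rk j)

/-- A transition of the unified construction (any valid merge partition). -/
noncomputable def UnifiedTrans [Fintype Q] (A : NBA Q Alp) (s : Slice Q) (x : Alp)
    (s' : Slice Q) (pr : ℕ) : Prop :=
  ∃ nt xs n' b, TransVia A s x s' pr nt xs n' b

/-- A transition of the Muller-Schupp construction (merge partition into singletons). -/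
noncomputable def MSTrans [Fintype Q] (A : NBA Q Alp) (s : Slice Q) (x : Alp)
    (s' : Slice Q) (pr : ℕ) : Prop :=
  ∃ nt xs, TransVia A s x s' pr nt xs nt id

/-- `B` is obtained from the unified construction for `A`. -/
noncomputable def ObtainedUnified [Fintype Q] (A : NBA Q Alp) (B : TDPA (Slice Q) Alp) : Prop :=
  B.p0.n = 1 ∧ B.p0.S 1 = A.Q0 ∧ B.p0.rk 1 = 1 ∧
  ∀ p, B.Reachable p → ∀ x, UnifiedTrans A p x (B.delta p x) (B.c p x)

/-- `B` is obtained from the Muller-Schupp construction for `A`. -/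
noncomputable def ObtainedMS [Fintype Q] (A : NBA Q Alp) (B : TDPA (Slice Q) Alp) : Prop :=
  B.p0.n = 1 ∧ B.p0.S 1 = A.Q0 ∧ B.p0.rk 1 = 1 ∧
  ∀ p, B.Reachable p → ∀ x, MSTrans A p x (B.delta p x) (B.c p x)

/-! ## Auxiliary lemmas -/

/-- The data of a Muller-Schupp transition, without the priority. -/
structure MSStep {Q Alp : Type} (A : NBA Q Alp) (s : Slice Q) (x : Alp) (s' : Slice Q)
    (xs : ℕ → ℕ) : Prop where
  v : s.Valid
  v' : s'.Valid
  pr : IsPrune A s x s'.n xs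
  hS : ∀ i ∈ Set.Icc 1 s'.n, s'.S i = hatS A s x (xs i)
  hN : ∀ i ∈ Set.Icc 1 s'.n, ∀ j ∈ Set.Icc 1 s'.n,
    tildeRk s xs i < tildeRk s xs j → s'.rk i < s'.rk j

theorem Slice.idx_eq {Q : Type} {s : Slice Q} (hv : s.Valid) {q : Q} {i : ℕ}
    (hi : i ∈ Set.Icc 1 s.n) (hq : q ∈ s.S i) : s.idx q = i := by
  have h : {i | 1 ≤ i ∧ i ≤ s.n ∧ q ∈ s.S i} = {i} := by
    ext j
    simp only [Set.mem_ofPred_eq, Set.mem_singleton_iff]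
    constructor
    · rintro ⟨h1, h2, h3⟩
      by_contra hne
      exact Set.disjoint_left.1 (hv.2.1 j ⟨h1, h2⟩ i hi hne) h3 hq
    · rintro rfl
      exact ⟨hi.1, hi.2, hq⟩
  unfold Slice.idx
  rw [h, csInf_singleton]

theorem Slice.n_le_card {Q : Type} [Fintype Q] {s : Slice Q} (hv : s.Valid) :
    s.n ≤ Fintype.card Q := by
  choose f hf using hv.1
  have hm : ∀ i : Fin s.n, i.1 + 1 ∈ Set.Icc 1 s.n := fun i => ⟨by omega, i.2⟩
  have hinj : Function.Injective (fun i : Fin s.n => f (i.1 + 1) (hm i)) := by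
    intro i j hij
    have h1 := Slice.idx_eq hv (hm i) (hf _ (hm i))
    have h2 := Slice.idx_eq hv (hm j) (hf _ (hm j))
    have hij' : f (i.1 + 1) (hm i) = f (j.1 + 1) (hm j) := hij
    rw [hij'] at h1
    apply Fin.ext
    omega
  simpa using Fintype.card_le_of_injective _ hinj

namespace MSStep

variable {Q Alp : Type} {A : NBA Q Alp} {s s' : Slice Q} {x : Alp} {xs : ℕ → ℕ}

theorem mono (h : MSStep A s x s' xs) : StrictMonoOn xs (Set.Icc 1 (s'.n + 1)) := by
  intro i hi j hj hij
  obtain ⟨h1, h2, h3, h4⟩ := h.pr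
  rcases Nat.lt_or_ge s'.n j with hjn | hjn
  · have : j = s'.n + 1 := le_antisymm hj.2 hjn
    subst this
    rw [h4]
    have := (h2 i ⟨hi.1, by omega⟩).1.2
    omega
  · exact h1 ⟨hi.1, by omega⟩ ⟨hj.1, hjn⟩ hij

theorem lt_iff (h : MSStep A s x s' xs) {i j : ℕ} (hi : i ∈ Set.Icc 1 (s'.n + 1))
    (hj : j ∈ Set.Icc 1 (s'.n + 1)) : xs i < xs j ↔ i < j := h.mono.lt_iff_lt hi hj

theorem le_iff (h : MSStep A s x s' xs) {i j : ℕ} (hi : i ∈ Set.Icc 1 (s'.n + 1))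
    (hj : j ∈ Set.Icc 1 (s'.n + 1)) : xs i ≤ xs j ↔ i ≤ j := h.mono.le_iff_le hi hj

/-- Every position right of a nonempty one lies in a unique cell. -/
theorem cell (h : MSStep A s x s' xs) {y j0 : ℕ} (hy : y ≤ 2 * s.n)
    (hj : j0 ∈ Set.Icc 1 s'.n) (hle : xs j0 ≤ y) :
    ∃ j ∈ Set.Icc 1 s'.n, j0 ≤ j ∧ xs j ≤ y ∧ y < xs (j + 1) := by
  classical
  have h1 := Nat.findGreatest_spec (P := fun j => xs j ≤ y) hj.2 hle
  have h2 := Nat.le_findGreatest (P := fun j => xs j ≤ y) hj.2 hle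
  have h3 := Nat.findGreatest_le (P := fun j => xs j ≤ y) s'.n
  refine ⟨Nat.findGreatest (fun j => xs j ≤ y) s'.n, ⟨le_trans hj.1 h2, h3⟩, h2, h1, ?_⟩
  rcases Nat.lt_or_ge (Nat.findGreatest (fun j => xs j ≤ y) s'.n) s'.n with hlt | hge
  · have := Nat.findGreatest_is_greatest (P := fun j => xs j ≤ y) (n := s'.n)
      (Nat.lt_succ_self _) hlt
    exact not_le.1 this
  · have he : Nat.findGreatest (fun j => xs j ≤ y) s'.n = s'.n := le_antisymm h3 hge
    rw [he, h.pr.2.2.2]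
    omega

theorem cell_unique (h : MSStep A s x s' xs) {y i j : ℕ}
    (hi : i ∈ Set.Icc 1 s'.n) (hj : j ∈ Set.Icc 1 s'.n)
    (h1 : xs i ≤ y) (h2 : y < xs (i + 1)) (h3 : xs j ≤ y) (h4 : y < xs (j + 1)) : i = j := by
  simp only [Set.mem_Icc] at hi hj
  have a := (h.lt_iff (i := i) (j := j + 1) ⟨hi.1, by omega⟩ ⟨by omega, by omega⟩).1 (by omega)
  have b := (h.lt_iff (i := j) (j := i + 1) ⟨hj.1, by omega⟩ ⟨by omega, by omega⟩).1 (by omega)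
  omega

/-- An element of the new slice has a predecessor in the old one. -/
theorem back (h : MSStep A s x s' xs) {j : ℕ} (hj : j ∈ Set.Icc 1 s'.n) {q' : Q}
    (hq : q' ∈ s'.S j) : ∃ i ∈ Set.Icc 1 s.n, ∃ q ∈ s.S i, q' ∈ A.delta q x ∧
      (q' ∈ A.F ∧ xs j + 1 = 2 * i ∨ q' ∉ A.F ∧ xs j = 2 * i) := by
  rw [h.hS j hj] at hq
  have hx := (h.pr.2.1 j hj).1
  simp only [Set.mem_Icc] at hx
  unfold hatS at hq
  split_ifs at hq with hodd
  · obtain ⟨hq1, hqF⟩ := hq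
    simp only [dTs, Set.mem_iUnion] at hq1
    obtain ⟨q, hqS, hqd⟩ := hq1
    exact ⟨(xs j + 1) / 2, ⟨by omega, by omega⟩, q, hqS, hqd.1, Or.inl ⟨hqF, by omega⟩⟩
  · obtain ⟨hq1, hqF⟩ := hq
    simp only [dTs, Set.mem_iUnion] at hq1
    obtain ⟨q, hqS, hqd⟩ := hq1
    exact ⟨xs j / 2, ⟨by omega, by omega⟩, q, hqS, hqd.1, Or.inr ⟨hqF, by omega⟩⟩

/-- Successors of states of the old slice occur in the new one, not further right. -/
theorem fwd (h : MSStep A s x s' xs) {i : ℕ} (hi : i ∈ Set.Icc 1 s.n) {q q' : Q}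
    (hq : q ∈ s.S i) (hd : q' ∈ A.delta q x) :
    ∃ j ∈ Set.Icc 1 s'.n, q' ∈ s'.S j ∧ xs j ≤ 2 * i ∧ (q' ∈ A.F → xs j < 2 * i) := by
  classical
  have hex : ∃ i, i ∈ Set.Icc 1 s.n ∧ ∃ q ∈ s.S i, q' ∈ A.delta q x := ⟨i, hi, q, hq, hd⟩
  obtain ⟨hi0, q0, hq0, hd0⟩ := Nat.find_spec hex
  have hle : Nat.find hex ≤ i := Nat.find_min' hex ⟨hi, q, hq, hd⟩
  have hmin := fun m => @Nat.find_min _ _ hex m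
  generalize Nat.find hex = i0 at *
  have hdT : q' ∈ dTs A s (s.S i0) x := by
    simp only [dTs, Set.mem_iUnion]
    refine ⟨q0, hq0, hd0, ?_⟩
    rw [Slice.idx_eq h.v hi0 hq0]
    simp only [NBA.nextSet, Set.mem_iUnion, not_exists]
    rintro p ⟨m, hm, hp⟩ hpd
    simp only [Set.mem_Icc] at hi0
    exact hmin m hm.2 ⟨⟨hm.1, by have := hm.2; omega⟩, p, hp, hpd⟩
  simp only [Set.mem_Icc] at hi0
  by_cases hF : q' ∈ A.F
  · have hm : q' ∈ hatS A s x (2 * i0 - 1) := by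
      unfold hatS
      rw [if_pos (by omega), show (2 * i0 - 1 + 1) / 2 = i0 by omega]
      exact ⟨hdT, hF⟩
    obtain ⟨j, hj, hxj⟩ := h.pr.2.2.1 (2 * i0 - 1) ⟨by omega, by omega⟩ ⟨q', hm⟩
    refine ⟨j, hj, ?_, by omega, fun _ => by omega⟩
    rw [h.hS j hj, hxj]
    exact hm
  · have hm : q' ∈ hatS A s x (2 * i0) := by
      unfold hatS
      rw [if_neg (by omega), show (2 * i0) / 2 = i0 by omega]
      exact ⟨hdT, hF⟩
    obtain ⟨j, hj, hxj⟩ := h.pr.2.2.1 (2 * i0) ⟨by omega, by omega⟩ ⟨q', hm⟩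
    refine ⟨j, hj, ?_, by omega, fun h => absurd h hF⟩
    rw [h.hS j hj, hxj]
    exact hm

theorem til_mem (h : MSStep A s x s' xs) {j : ℕ} (hj : j ∈ Set.Icc 1 s'.n) :
    ∃ y, 1 ≤ y ∧ y ≤ 2 * s.n ∧ xs j ≤ y ∧ y < xs (j + 1) ∧ tildeRk s xs j = hatRk s y := by
  simp only [Set.mem_Icc] at hj
  have hlt : xs j < xs (j + 1) :=
    (h.lt_iff ⟨hj.1, by omega⟩ ⟨by omega, by omega⟩).2 (Nat.lt_succ_self j)
  have hle : xs (j + 1) ≤ xs (s'.n + 1) :=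
    (h.le_iff ⟨by omega, by omega⟩ ⟨by omega, by omega⟩).2 (by omega)
  rw [h.pr.2.2.2] at hle
  have h1 := (h.pr.2.1 j hj).1.1
  have hne : (hatRk s '' {y | xs j ≤ y ∧ y < xs (j + 1)}).Nonempty :=
    ⟨_, xs j, ⟨le_refl _, hlt⟩, rfl⟩
  obtain ⟨y, hy, hye⟩ := Nat.sInf_mem hne
  exact ⟨y, by have := hy.1; omega, by have := hy.2; omega, hy.1, hy.2, hye.symm⟩

theorem til_le {j y : ℕ} (h1 : xs j ≤ y) (h2 : y < xs (j + 1)) :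
    tildeRk s xs j ≤ hatRk s y := Nat.sInf_le ⟨y, ⟨h1, h2⟩, rfl⟩

theorem rk_mem (hv : s.Valid) {i : ℕ} (hi : i ∈ Set.Icc 1 s.n) : s.rk i ∈ Set.Icc 1 s.n :=
  hv.2.2.1.mapsTo hi

theorem hatRk_even (i : ℕ) : hatRk s (2 * i) = s.rk i := by
  unfold hatRk
  rw [if_neg (by omega), show 2 * i / 2 = i by omega]

theorem hatRk_pos (hv : s.Valid) {y : ℕ} (h1 : 1 ≤ y) (h2 : y ≤ 2 * s.n) : 1 ≤ hatRk s y := by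
  unfold hatRk
  split_ifs
  · omega
  · exact (rk_mem hv (i := y / 2) ⟨by omega, by omega⟩).1

theorem hatRk_le (hv : s.Valid) {y : ℕ} (h1 : 1 ≤ y) (h2 : y ≤ 2 * s.n) :
    hatRk s y ≤ s.n + 1 := by
  unfold hatRk
  split_ifs
  · omega
  · have := (rk_mem hv (i := y / 2) ⟨by omega, by omega⟩).2
    omega

/-- A position of a small rank is the even position of the host of that rank. -/
theorem hatRk_host (hv : s.Valid) {y i : ℕ} (h1 : 1 ≤ y) (h2 : y ≤ 2 * s.n)
    (hi : i ∈ Set.Icc 1 s.n) (he : hatRk s y = s.rk i) : y = 2 * i := by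
  unfold hatRk at he
  have hr := (rk_mem hv hi).2
  split_ifs at he
  · omega
  · have := hv.2.2.1.injOn (x₁ := y / 2) ⟨by omega, by omega⟩ hi he
    omega

theorem exists_host (hv : s.Valid) {r : ℕ} (h1 : 1 ≤ r) (h2 : r ≤ s.n) :
    ∃ i ∈ Set.Icc 1 s.n, s.rk i = r := hv.2.2.1.surjOn ⟨h1, h2⟩

theorem til_pos (h : MSStep A s x s' xs) {j : ℕ} (hj : j ∈ Set.Icc 1 s'.n) :
    1 ≤ tildeRk s xs j := by
  obtain ⟨y, h1, h2, -, -, h5⟩ := h.til_mem hj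
  rw [h5]
  exact hatRk_pos h.v h1 h2

theorem til_inj (h : MSStep A s x s' xs) {i j : ℕ} (hi : i ∈ Set.Icc 1 s'.n)
    (hj : j ∈ Set.Icc 1 s'.n) (hle : tildeRk s xs i ≤ s.n)
    (he : tildeRk s xs i = tildeRk s xs j) : i = j := by
  obtain ⟨y, h1, h2, h3, h4, h5⟩ := h.til_mem hi
  obtain ⟨z, k1, k2, k3, k4, k5⟩ := h.til_mem hj
  obtain ⟨l, hl, hlr⟩ := exists_host h.v (h.til_pos hi) hle
  have e1 := hatRk_host h.v h1 h2 hl (by omega)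
  have e2 := hatRk_host h.v k1 k2 hl (by omega)
  rw [← e2] at e1
  subst e1
  exact h.cell_unique hi hj h3 h4 k3 k4

open Classical in
theorem card_below (hv : s.Valid) {i : ℕ} (hi : i ∈ Set.Icc 1 s.n) :
    ((Finset.Icc 1 s.n).filter (fun j => s.rk j < s.rk i)).card = s.rk i - 1 := by
  have hr := rk_mem hv hi
  simp only [Set.mem_Icc] at hr
  have : ((Finset.Icc 1 s.n).filter (fun j => s.rk j < s.rk i)).image s.rk
      = Finset.Icc 1 (s.rk i - 1) := by
    ext r
    simp only [Finset.mem_image, Finset.mem_filter, Finset.mem_Icc]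
    constructor
    · rintro ⟨j, ⟨hj, hlt⟩, rfl⟩
      have := rk_mem hv (i := j) hj
      exact ⟨this.1, by omega⟩
    · rintro ⟨h1, h2⟩
      obtain ⟨j, hj, hjr⟩ := exists_host hv (r := r) h1 (by omega)
      exact ⟨j, ⟨hj, by omega⟩, hjr⟩
  rw [← Finset.card_image_of_injOn (f := s.rk), this, Nat.card_Icc]
  · omega
  · intro a ha b hb hab
    simp only [Finset.coe_filter, Finset.mem_Icc, Set.mem_ofPred_eq] at ha hb
    exact hv.2.2.1.injOn ha.1 hb.1 hab

open Classical in
theorem card_til_le (h : MSStep A s x s' xs) {i : ℕ} (hi : i ∈ Set.Icc 1 s'.n)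
    (hle : tildeRk s xs i ≤ s.n) (X : Finset ℕ)
    (hX : ∀ j ∈ Set.Icc 1 s'.n, tildeRk s xs j < tildeRk s xs i → tildeRk s xs j ∈ X) :
    s'.rk i - 1 ≤ X.card := by
  rw [← card_below h.v' hi]
  have key : ∀ j ∈ (Finset.Icc 1 s'.n).filter (fun j => s'.rk j < s'.rk i),
      j ∈ Set.Icc 1 s'.n ∧ tildeRk s xs j < tildeRk s xs i := by
    intro j hj
    simp only [Finset.mem_filter, Finset.mem_Icc] at hj
    refine ⟨hj.1, ?_⟩
    rcases lt_trichotomy (tildeRk s xs j) (tildeRk s xs i) with hl | hl | hl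
    · exact hl
    · have := h.til_inj hi hj.1 hle hl.symm
      subst this
      omega
    · have := h.hN i hi j hj.1 hl
      omega
  refine Finset.card_le_card_of_injOn (tildeRk s xs) (fun j hj => ?_) ?_
  · exact hX j (key j hj).1 (key j hj).2
  · intro a ha b hb hab
    have ka := key a ha
    have kb := key b hb
    exact h.til_inj ka.1 kb.1 (by omega) hab

theorem rk_le_til (h : MSStep A s x s' xs) {i : ℕ} (hi : i ∈ Set.Icc 1 s'.n)
    (hle : tildeRk s xs i ≤ s.n) : s'.rk i ≤ tildeRk s xs i := by
  have h1 := h.card_til_le hi hle (Finset.Icc 1 (tildeRk s xs i - 1)) (by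
    intro j hj hlt
    have := h.til_pos hj
    simp only [Finset.mem_Icc]
    omega)
  rw [Nat.card_Icc] at h1
  have := h.til_pos hi
  omega

theorem rk_lt_til (h : MSStep A s x s' xs) {i r : ℕ} (hi : i ∈ Set.Icc 1 s'.n)
    (hle : tildeRk s xs i ≤ s.n) (hr1 : 1 ≤ r) (hr2 : r < tildeRk s xs i)
    (hr : ¬ ∃ j ∈ Set.Icc 1 s'.n, tildeRk s xs j = r) : s'.rk i < tildeRk s xs i := by
  have h1 := h.card_til_le hi hle ((Finset.Icc 1 (tildeRk s xs i - 1)).erase r) (by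
    intro j hj hlt
    have := h.til_pos hj
    simp only [Finset.mem_Icc, Finset.mem_erase]
    refine ⟨fun he => hr ⟨j, hj, he⟩, by omega⟩)
  rw [Finset.card_erase_of_mem (by simp only [Finset.mem_Icc]; omega), Nat.card_Icc] at h1
  omega

open Classical in
theorem til_le_rk (h : MSStep A s x s' xs) {i : ℕ} (hi : i ∈ Set.Icc 1 s'.n)
    (himg : ∀ r, 1 ≤ r → r < tildeRk s xs i → ∃ j ∈ Set.Icc 1 s'.n, tildeRk s xs j = r) :
    tildeRk s xs i ≤ s'.rk i := by
  have hsub : Finset.Icc 1 (tildeRk s xs i - 1) ⊆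
      ((Finset.Icc 1 s'.n).filter (fun j => s'.rk j < s'.rk i)).image (tildeRk s xs) := by
    intro r hr
    simp only [Finset.mem_Icc] at hr
    obtain ⟨j, hj, hjr⟩ := himg r hr.1 (by omega)
    simp only [Finset.mem_image, Finset.mem_filter, Finset.mem_Icc]
    exact ⟨j, ⟨hj, h.hN j hj i hi (by omega)⟩, hjr⟩
  have h1 := (Finset.card_le_card hsub).trans Finset.card_image_le
  rw [card_below h.v' hi, Nat.card_Icc] at h1
  have := rk_mem h.v' hi
  simp only [Set.mem_Icc] at this
  omega

open Classical in
theorem n_ge (h : MSStep A s x s' xs) {M : ℕ}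
    (himg : ∀ r, 1 ≤ r → r ≤ M → ∃ j ∈ Set.Icc 1 s'.n, tildeRk s xs j = r) : M ≤ s'.n := by
  have hsub : Finset.Icc 1 M ⊆ (Finset.Icc 1 s'.n).image (tildeRk s xs) := by
    intro r hr
    simp only [Finset.mem_Icc] at hr
    obtain ⟨j, hj, hjr⟩ := himg r hr.1 hr.2
    simp only [Finset.mem_image, Finset.mem_Icc]
    exact ⟨j, hj, hjr⟩
  have h1 := (Finset.card_le_card hsub).trans Finset.card_image_le
  simpa using h1

theorem img_of_not_red (h : MSStep A s x s' xs) (hn : 1 ≤ s.n) {r : ℕ} (h1 : 1 ≤ r)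
    (h2 : r ≤ s.n + 1) (hr : r ∉ redSet s s'.n xs) :
    ∃ j ∈ Set.Icc 1 s'.n, tildeRk s xs j = r := by
  by_contra hc
  refine hr ⟨?_, hc⟩
  rcases Nat.lt_or_ge s.n r with hlt | hge
  · refine ⟨1, ⟨le_refl _, by omega⟩, ?_⟩
    unfold hatRk
    rw [if_pos (by omega)]
    omega
  · obtain ⟨i, hi, hir⟩ := exists_host h.v h1 hge
    exact ⟨2 * i, ⟨by have := hi.1; omega, by have := hi.2; omega⟩, by rw [hatRk_even, hir]⟩

theorem n_ge_of_not_red (h : MSStep A s x s' xs) (hn : 1 ≤ s.n) {M : ℕ}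
    (h2 : M ≤ s.n + 1) (hr : ∀ r ≤ M, r ∉ redSet s s'.n xs) : M ≤ s'.n :=
  h.n_ge fun r h1 hrM => h.img_of_not_red hn h1 (by omega) (hr r hrM)

/-- A rank below all red ranks keeps its value and moves to the cell of its position. -/
theorem persist (h : MSStep A s x s' xs) {i : ℕ} (hi : i ∈ Set.Icc 1 s.n)
    (hr : ∀ r ≤ s.rk i, r ∉ redSet s s'.n xs) :
    ∃ j ∈ Set.Icc 1 s'.n, s'.rk j = s.rk i ∧ xs j ≤ 2 * i ∧ 2 * i < xs (j + 1) := by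
  have hrk := rk_mem h.v hi
  have hn : 1 ≤ s.n := le_trans hi.1 hi.2
  simp only [Set.mem_Icc] at hrk
  obtain ⟨j, hj, hjr⟩ := h.img_of_not_red hn hrk.1 (by omega) (hr _ le_rfl)
  obtain ⟨y, h1, h2, h3, h4, h5⟩ := h.til_mem hj
  have hy := hatRk_host h.v h1 h2 hi (by omega)
  subst hy
  refine ⟨j, hj, ?_, h3, h4⟩
  have a := h.rk_le_til hj (by omega)
  have b := h.til_le_rk hj (fun r hr1 hr2 => h.img_of_not_red hn hr1 (by omega) (hr _ (by omega)))
  omega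

/-- An inactive rank below all red ranks stays at the right child. -/
theorem persist' (h : MSStep A s x s' xs) {i : ℕ} (hi : i ∈ Set.Icc 1 s.n)
    (hr : ∀ r ≤ s.rk i, r ∉ redSet s s'.n xs) (hg : s.rk i ∉ greenSet A s x s'.n xs) :
    ∃ j ∈ Set.Icc 1 s'.n, s'.rk j = s.rk i ∧ xs j = 2 * i := by
  obtain ⟨j, hj, hjr, h1, h2⟩ := h.persist hi hr
  refine ⟨j, hj, hjr, ?_⟩
  have hrk := rk_mem h.v hi
  have hn : 1 ≤ s.n := le_trans hi.1 hi.2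
  simp only [Set.mem_Icc] at hrk hi
  have hne : (hatS A s x (2 * i)).Nonempty := by
    rw [Set.nonempty_iff_ne_empty]
    intro he
    exact hg ⟨h.img_of_not_red hn hrk.1 (by omega) (hr _ le_rfl), 2 * i,
      ⟨by omega, by omega⟩, he, hatRk_even i⟩
  obtain ⟨l, hl, hlx⟩ := h.pr.2.2.1 (2 * i) ⟨by omega, by omega⟩ hne
  have hl' := hl
  simp only [Set.mem_Icc] at hl'
  have := h.cell_unique hj hl h1 h2 (by omega)
    (by rw [← hlx]; exact (h.lt_iff ⟨by omega, by omega⟩ ⟨by omega, by omega⟩).2 (by omega))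
  rw [this, hlx]

end MSStep

/-- Koenig lemma via an ultrafilter limit. -/
theorem konig_limit {Q : Type} [Finite Q] (E : ℕ → Q → Q → Prop) (p : ℕ → ℕ → Q)
    (h : ∀ T t, t < T → E t (p T t) (p T (t + 1))) :
    ∃ ρ : ℕ → Q, (∀ t, E t (ρ t) (ρ (t + 1))) ∧ ∀ N M, ∃ T, M ≤ T ∧ p T N = ρ N := by
  have hex : ∀ t, ∃ v, ∀ᶠ T in (Filter.hyperfilter ℕ : Filter ℕ), p T t = v := by
    intro t
    by_contra hc
    push Not at hc
    have h1 : ∀ v, ∀ᶠ T in (Filter.hyperfilter ℕ : Filter ℕ), p T t ≠ v := fun v =>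
      Ultrafilter.eventually_not.2 (by simpa using hc v)
    have h2 := Filter.eventually_all.2 h1
    obtain ⟨T, hT⟩ := h2.exists
    exact hT _ rfl
  choose ρ hρ using hex
  have hge : ∀ M, ∀ᶠ T in (Filter.hyperfilter ℕ : Filter ℕ), M ≤ T := fun M =>
    (Nat.hyperfilter_le_atTop (Filter.eventually_ge_atTop M))
  refine ⟨ρ, fun t => ?_, fun N M => ?_⟩
  · obtain ⟨T, h1, h2, h3⟩ := ((hρ t).and ((hρ (t + 1)).and (hge (t + 1)))).exists
    rw [← h1, ← h2]
    exact h T t h3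
  · obtain ⟨T, h1, h2⟩ := ((hρ N).and (hge M)).exists
    exact ⟨T, h2, h1⟩

section Main

variable {Q Alp : Type} {A : NBA Q Alp} {w : ℕ → Alp} {s : ℕ → Slice Q} {xs : ℕ → ℕ → ℕ}

/-- Tree edges between consecutive slices. -/
def TEdge (A : NBA Q Alp) (w : ℕ → Alp) (s : ℕ → Slice Q) (xs : ℕ → ℕ → ℕ)
    (t : ℕ) (q q' : Q) : Prop :=
  (s t).idx q ∈ Set.Icc 1 (s t).n ∧ q ∈ (s t).S ((s t).idx q) ∧
  (s (t + 1)).idx q' ∈ Set.Icc 1 (s (t + 1)).n ∧ q' ∈ (s (t + 1)).S ((s (t + 1)).idx q') ∧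
  q' ∈ A.delta q (w t) ∧
  (q' ∈ A.F ∧ xs t ((s (t + 1)).idx q') + 1 = 2 * (s t).idx q ∨
    q' ∉ A.F ∧ xs t ((s (t + 1)).idx q') = 2 * (s t).idx q)

theorem exists_tpath (hst : ∀ t, MSStep A (s t) (w t) (s (t + 1)) (xs t)) (T : ℕ) :
    ∀ i ∈ Set.Icc 1 (s T).n, ∀ q ∈ (s T).S i,
      ∃ p : ℕ → Q, p T = q ∧ ∀ t < T, TEdge A w s xs t (p t) (p (t + 1)) := by
  induction T with
  | zero => exact fun i _ q _ => ⟨fun _ => q, rfl, fun t ht => absurd ht (Nat.not_lt_zero t)⟩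
  | succ T ih =>
    intro j hj q' hq'
    obtain ⟨i, hi, q, hq, hd, hx⟩ := (hst T).back hj hq'
    obtain ⟨p, hp, hpe⟩ := ih i hi q hq
    have e1 := Slice.idx_eq (hst T).v hi hq
    have e2 := Slice.idx_eq (hst T).v' hj hq'
    refine ⟨fun t => if t ≤ T then p t else q', by simp, fun t ht => ?_⟩
    rcases Nat.lt_or_ge t T with hlt | hge
    · have := hpe t hlt
      simpa [show t ≤ T by omega, show t + 1 ≤ T by omega] using this
    · have : t = T := by omega
      subst this
      simp only [le_refl, if_true, show ¬ (t + 1 ≤ t) by omega, if_false]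
      rw [hp]
      unfold TEdge
      rw [e1, e2]
      exact ⟨hi, hq, hj, hq', hd, hx⟩

theorem ms_sound [Finite Q] (hst : ∀ t, MSStep A (s t) (w t) (s (t + 1)) (xs t))
    (h0 : (s 0).n = 1) (h0S : (s 0).S 1 = A.Q0) (k : ℕ) (hk : 1 ≤ k) (T0 : ℕ)
    (hR : ∀ t, T0 ≤ t → ∀ r ≤ k, r ∉ redSet (s t) (s (t + 1)).n (xs t))
    (hG : ∀ N, ∃ t, N ≤ t ∧ k ∈ greenSet A (s t) (w t) (s (t + 1)).n (xs t)) :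
    A.Accepts w := by
  -- the rank `k` exists from some point on
  have hex : ∃ T1, T0 ≤ T1 ∧ ∀ t, T1 ≤ t → k ≤ (s t).n := by
    obtain ⟨t0, ht0, ⟨⟨i, hi, hik⟩, y, hy, -, hyk⟩⟩ := hG T0
    have hy' := hy
    simp only [Set.mem_Icc] at hy'
    refine ⟨t0 + 1, by omega, fun t ht => ?_⟩
    induction t, ht using Nat.le_induction with
    | base =>
      have := MSStep.hatRk_le (hst t0).v hy'.1 hy'.2
      exact (hst t0).n_ge_of_not_red (by omega) (by omega) (hR t0 ht0)
    | succ t ht ih => exact (hst t).n_ge_of_not_red (by omega) (by omega) (hR t (by omega))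
  obtain ⟨T1, hT1, hn⟩ := hex
  have hh : ∀ t, ∃ i, T1 ≤ t → i ∈ Set.Icc 1 (s t).n ∧ (s t).rk i = k := by
    intro t
    by_cases ht : T1 ≤ t
    · obtain ⟨i, hi, hir⟩ := MSStep.exists_host (hst t).v hk (hn t ht)
      exact ⟨i, fun _ => ⟨hi, hir⟩⟩
    · exact ⟨0, fun h => absurd h ht⟩
  choose H hH using hh
  have hstep : ∀ t, T1 ≤ t → xs t (H (t + 1)) ≤ 2 * H t ∧ 2 * H t < xs t (H (t + 1) + 1) := by
    intro t ht
    obtain ⟨a, b⟩ := hH t ht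
    obtain ⟨c, d⟩ := hH (t + 1) (by omega)
    obtain ⟨j, hj, hjr, h1, h2⟩ := (hst t).persist a (by rw [b]; exact hR t (by omega))
    have : j = H (t + 1) := (hst t).v'.2.2.1.injOn hj c (by omega)
    subst this
    exact ⟨h1, h2⟩
  -- paths to the hosts
  have hp : ∀ T, ∃ p : ℕ → Q, (s (T1 + T)).idx (p (T1 + T)) = H (T1 + T) ∧
      ∀ t < T1 + T, TEdge A w s xs t (p t) (p (t + 1)) := by
    intro T
    obtain ⟨a, b⟩ := hH (T1 + T) (by omega)
    obtain ⟨q, hq⟩ := (hst (T1 + T)).v.1 _ a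
    obtain ⟨p, h1, h2⟩ := exists_tpath hst (T1 + T) _ a q hq
    exact ⟨p, by rw [h1]; exact Slice.idx_eq (hst _).v a hq, h2⟩
  choose p hpH hpE using hp
  obtain ⟨ρ, hρ, hlim⟩ := konig_limit (TEdge A w s xs) p
    (fun T t ht => hpE T t (by omega))
  refine ⟨ρ, ⟨?_, fun i => (hρ i).2.2.2.2.1⟩, ?_⟩
  · have h1 := (hρ 0).1
    have h2 := (hρ 0).2.1
    rw [h0] at h1
    have : (s 0).idx (ρ 0) = 1 := le_antisymm h1.2 h1.1
    rwa [this, h0S] at h2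
  · by_contra hc
    push Not at hc
    obtain ⟨N, hN⟩ := hc
    obtain ⟨T, hT, hTe⟩ := hlim (max N T1) (max N T1)
    have hN0 : N ≤ max N T1 := le_max_left _ _
    have hN1 : T1 ≤ max N T1 := le_max_right _ _
    generalize max N T1 = N0 at *
    -- edges left of the host stay left, edges right of it stay right
    have hup : ∀ t q q', T1 ≤ t → TEdge A w s xs t q q' → (s t).idx q ≤ H t →
        (s (t + 1)).idx q' ≤ H (t + 1) := by
      intro t q q' ht ⟨_, _, a, _, _, hx⟩ hle
      have c := (hH (t + 1) (by omega)).1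
      have d := hstep t ht
      simp only [Set.mem_Icc] at a c
      have hlt : xs t ((s (t + 1)).idx q') < xs t (H (t + 1) + 1) := by
        rcases hx with ⟨_, hx⟩ | ⟨_, hx⟩ <;> omega
      have := ((hst t).lt_iff ⟨a.1, by omega⟩ ⟨by omega, by omega⟩).1 hlt
      omega
    have hgt : ∀ t q q', T1 ≤ t → TEdge A w s xs t q q' → H t < (s t).idx q →
        H (t + 1) < (s (t + 1)).idx q' := by
      intro t q q' ht ⟨_, _, a, _, _, hx⟩ hlt
      have c := (hH (t + 1) (by omega)).1
      have d := hstep t ht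
      simp only [Set.mem_Icc] at a c
      refine ((hst t).lt_iff ⟨c.1, by omega⟩ ⟨by omega, by omega⟩).1 ?_
      rcases hx with ⟨_, hx⟩ | ⟨_, hx⟩ <;> omega
    have hle0 : (s N0).idx (ρ N0) ≤ H N0 := by
      by_contra hlt
      push Not at hlt
      have : ∀ t, N0 ≤ t → t ≤ T1 + T → H t < (s t).idx (p T t) := by
        intro t ht
        induction t, ht using Nat.le_induction with
        | base => intro _; rw [hTe]; exact hlt
        | succ t ht ih =>
          intro h
          exact hgt t _ _ (by omega) (hpE T t (by omega)) (ih (by omega))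
      have := this (T1 + T) (by omega) le_rfl
      rw [hpH T] at this
      omega
    have hle : ∀ t, N0 ≤ t → (s t).idx (ρ t) ≤ H t := by
      intro t ht
      induction t, ht using Nat.le_induction with
      | base => exact hle0
      | succ t ht ih => exact hup t _ _ (by omega) (hρ t) ih
    have hge : ∀ t, N0 ≤ t → t ≤ T1 + T → (s t).idx (p T t) ≤ (s t).idx (ρ t) := by
      intro t ht
      induction t, ht using Nat.le_induction with
      | base => intro _; rw [hTe]
      | succ t ht ih =>
        intro h
        have ih := ih (by omega)
        obtain ⟨_, _, a, _, _, hx⟩ := hpE T t (by omega)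
        obtain ⟨_, _, b, _, _, hy⟩ := hρ t
        have hF := hN (t + 1) (by omega)
        simp only [Set.mem_Icc] at a b
        refine ((hst t).le_iff ⟨a.1, by omega⟩ ⟨b.1, by omega⟩).1 ?_
        rcases hy with ⟨hy, _⟩ | ⟨_, hy⟩
        · exact absurd hy hF
        · rcases hx with ⟨_, hx⟩ | ⟨_, hx⟩ <;> omega
    have heq : ∀ t, T1 + T ≤ t → (s t).idx (ρ t) = H t := by
      intro t ht
      induction t, ht using Nat.le_induction with
      | base =>
        have h1 := hge (T1 + T) (by omega) le_rfl
        rw [hpH T] at h1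
        exact le_antisymm (hle _ (by omega)) h1
      | succ t ht ih =>
        refine le_antisymm (hle _ (by omega)) ?_
        obtain ⟨_, _, b, _, _, hy⟩ := hρ t
        have hF := hN (t + 1) (by omega)
        have c := (hH (t + 1) (by omega)).1
        have d := hstep t (by omega)
        simp only [Set.mem_Icc] at b c
        refine ((hst t).le_iff ⟨c.1, by omega⟩ ⟨b.1, by omega⟩).1 ?_
        rcases hy with ⟨hy, _⟩ | ⟨_, hy⟩
        · exact absurd hy hF
        · omega
    obtain ⟨t, ht, _, y, hy, hye, hyk⟩ := hG (T1 + T)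
    obtain ⟨a, b⟩ := hH t (by omega)
    have hy2 := MSStep.hatRk_host (hst t).v hy.1 hy.2 a (by omega)
    obtain ⟨_, _, c, hm, _, hz⟩ := hρ t
    rw [(hst t).hS _ c] at hm
    have hF := hN (t + 1) (by omega)
    have he := heq t ht
    rcases hz with ⟨hz, _⟩ | ⟨_, hz⟩
    · exact absurd hz hF
    · rw [hz, he, ← hy2, hye] at hm
      exact hm

theorem ms_complete [Fintype Q] (hst : ∀ t, MSStep A (s t) (w t) (s (t + 1)) (xs t))
    (h0 : (s 0).n = 1) (h0S : (s 0).S 1 = A.Q0) (k : ℕ) (hk : 1 ≤ k) (T0 : ℕ)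
    (hR : ∀ t, T0 ≤ t → ∀ r < k, r ∉ redSet (s t) (s (t + 1)).n (xs t))
    (hG : ∀ t, T0 ≤ t → ∀ r < k, r ∉ greenSet A (s t) (w t) (s (t + 1)).n (xs t))
    (hinf : ∀ N, ∃ t, N ≤ t ∧
      (k ∈ redSet (s t) (s (t + 1)).n (xs t) ∨ Fintype.card Q < k))
    (hacc : A.Accepts w) : False := by
  obtain ⟨ρ, ⟨hρ0, hρs⟩, hρF⟩ := hacc
  -- positions of the run
  have hmem : ∀ t, (s t).idx (ρ t) ∈ Set.Icc 1 (s t).n ∧ ρ t ∈ (s t).S ((s t).idx (ρ t)) := by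
    intro t
    induction t with
    | zero =>
      have h1 : 1 ∈ Set.Icc 1 (s 0).n := ⟨le_rfl, by omega⟩
      have h2 : ρ 0 ∈ (s 0).S 1 := by rw [h0S]; exact hρ0
      rw [Slice.idx_eq (hst 0).v h1 h2]
      exact ⟨h1, h2⟩
    | succ t ih =>
      obtain ⟨j, hj, hq, -, -⟩ := (hst t).fwd ih.1 ih.2 (hρs t)
      rw [Slice.idx_eq (hst t).v' hj hq]
      exact ⟨hj, hq⟩
  have hmove : ∀ t, xs t ((s (t + 1)).idx (ρ (t + 1))) ≤ 2 * (s t).idx (ρ t) ∧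
      (ρ (t + 1) ∈ A.F → xs t ((s (t + 1)).idx (ρ (t + 1))) < 2 * (s t).idx (ρ t)) := by
    intro t
    obtain ⟨j, hj, hq, h1, h2⟩ := (hst t).fwd (hmem t).1 (hmem t).2 (hρs t)
    rw [Slice.idx_eq (hst t).v' hj hq]
    exact ⟨h1, h2⟩
  have ha : ∀ t, (s t).idx (ρ t) ∈ Set.Icc 1 (s t).n := fun t => (hmem t).1
  generalize haa : (fun t => (s t).idx (ρ t)) = a at *
  have haa' : ∀ t, (s t).idx (ρ t) = a t := fun t => congrFun haa t
  simp only [haa'] at hmove ha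
  have hn1 : ∀ t, 1 ≤ (s t).n := fun t => le_trans (ha t).1 (ha t).2
  -- enough ranks exist from some point on
  have hex : ∃ T1, T0 ≤ T1 ∧ k ≤ (s T1).n + 1 := by
    by_contra hc
    push Not at hc
    have : ∀ i, i ≤ (s (T0 + i)).n := by
      intro i
      induction i with
      | zero => omega
      | succ i ih =>
        have h1 := hc (T0 + i) (by omega)
        have := (hst (T0 + i)).n_ge_of_not_red (hn1 _) (M := (s (T0 + i)).n + 1) le_rfl
          (fun r hr => hR _ (by omega) r (by omega))
        rw [show T0 + (i + 1) = T0 + i + 1 by omega]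
        omega
    have h1 := hc (T0 + k) (by omega)
    have h2 := this k
    omega
  obtain ⟨T1, hT1, hkT1⟩ := hex
  have hn : ∀ t, T1 ≤ t → k ≤ (s t).n + 1 := by
    intro t ht
    induction t, ht using Nat.le_induction with
    | base => exact hkT1
    | succ t ht ih =>
      have := (hst t).n_ge_of_not_red (hn1 _) (M := k - 1) (by omega)
          (fun r hr => hR _ (by omega) r (by omega))
      omega
  have hh : ∀ t r, ∃ i, T1 ≤ t → 1 ≤ r → r < k → i ∈ Set.Icc 1 (s t).n ∧ (s t).rk i = r := by
    intro t r
    by_cases ht : T1 ≤ t ∧ 1 ≤ r ∧ r < k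
    · have := hn t ht.1
      obtain ⟨i, hi, hir⟩ := MSStep.exists_host (hst t).v ht.2.1 (show r ≤ (s t).n by omega)
      exact ⟨i, fun _ _ _ => ⟨hi, hir⟩⟩
    · exact ⟨0, fun h1 h2 h3 => absurd ⟨h1, h2, h3⟩ ht⟩
  choose H hH using hh
  have hstep : ∀ t r, T1 ≤ t → 1 ≤ r → r < k → xs t (H (t + 1) r) = 2 * H t r := by
    intro t r ht h1 h2
    obtain ⟨b, c⟩ := hH t r ht h1 h2
    obtain ⟨d, e⟩ := hH (t + 1) r (by omega) h1 h2
    obtain ⟨j, hj, hjr, hx⟩ := (hst t).persist' b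
      (fun r' hr' => hR t (by omega) r' (by omega)) (hG t (by omega) _ (by omega))
    have : j = H (t + 1) r := (hst t).v'.2.2.1.injOn hj d (by omega)
    subst this
    exact hx
  have hlt : ∀ t r, T1 ≤ t → 1 ≤ r → r < k → a t < H t r → a (t + 1) < H (t + 1) r := by
    intro t r ht h1 h2 hl
    have b := (hH (t + 1) r (by omega) h1 h2).1
    have c := ha (t + 1)
    simp only [Set.mem_Icc] at b c
    refine ((hst t).lt_iff ⟨c.1, by omega⟩ ⟨b.1, by omega⟩).1 ?_
    rw [hstep t r ht h1 h2]
    have := (hmove t).1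
    omega
  have hle : ∀ t r, T1 ≤ t → 1 ≤ r → r < k → a t ≤ H t r → a (t + 1) ≤ H (t + 1) r ∧
      (ρ (t + 1) ∈ A.F → a (t + 1) < H (t + 1) r) := by
    intro t r ht h1 h2 hl
    have b := (hH (t + 1) r (by omega) h1 h2).1
    have c := ha (t + 1)
    have d := hmove t
    simp only [Set.mem_Icc] at b c
    constructor
    · refine ((hst t).le_iff ⟨c.1, by omega⟩ ⟨b.1, by omega⟩).1 ?_
      rw [hstep t r ht h1 h2]
      omega
    · intro hF
      refine ((hst t).lt_iff ⟨c.1, by omega⟩ ⟨b.1, by omega⟩).1 ?_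
      rw [hstep t r ht h1 h2]
      have := d.2 hF
      omega
  have hstable : ∀ r, 1 ≤ r → r < k → ∃ T, T1 ≤ T ∧
      ((∀ t, T ≤ t → a t < H t r) ∨ (∀ t, T ≤ t → H t r < a t)) := by
    intro r h1 h2
    by_cases hc : ∃ t, T1 ≤ t ∧ a t < H t r
    · obtain ⟨T, hT, hl⟩ := hc
      refine ⟨T, hT, Or.inl fun t ht => ?_⟩
      induction t, ht using Nat.le_induction with
      | base => exact hl
      | succ t ht ih => exact hlt t r (by omega) h1 h2 ih
    · push Not at hc
      refine ⟨T1, le_rfl, Or.inr fun t ht => ?_⟩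
      by_contra hl
      push Not at hl
      have hall : ∀ t', t ≤ t' → a t' ≤ H t' r := by
        intro t' ht'
        induction t', ht' using Nat.le_induction with
        | base => exact hl
        | succ t' ht' ih => exact (hle t' r (by omega) h1 h2 ih).1
      obtain ⟨u, hu, huF⟩ := hρF (t + 1)
      obtain ⟨v, rfl⟩ : ∃ v, u = v + 1 := ⟨u - 1, by omega⟩
      have h3 := (hle v r (by omega) h1 h2 (hall v (by omega))).2 huF
      have h4 := hc (v + 1) (by omega)
      omega
  have hstable' : ∃ T2, T1 ≤ T2 ∧ ∀ r, 1 ≤ r → r < k →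
      ((∀ t, T2 ≤ t → a t < H t r) ∨ (∀ t, T2 ≤ t → H t r < a t)) := by
    choose! f hf1 hf2 using hstable
    refine ⟨T1 + (Finset.range k).sup f, by omega, fun r h1 h2 => ?_⟩
    have hfs : f r ≤ (Finset.range k).sup f := Finset.le_sup (Finset.mem_range.2 h2)
    rcases hf2 r h1 h2 with h | h
    · exact Or.inl fun t ht => h t (by omega)
    · exact Or.inr fun t ht => h t (by omega)
  obtain ⟨T2, hT2, hst2⟩ := hstable'
  let D : ℕ → ℕ → Prop := fun t i => a t ≤ i ∧ i ≤ (s t).n ∧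
    ∀ r, 1 ≤ r → r < k → ¬ (a t ≤ H t r ∧ H t r ≤ i)
  have hDk : ∀ t i, T2 ≤ t → D t i → k ≤ (s t).rk i := by
    intro t i ht ⟨h1, h2, h3⟩
    by_contra hc
    push Not at hc
    have hi : i ∈ Set.Icc 1 (s t).n := ⟨le_trans (ha t).1 h1, h2⟩
    have hr := (MSStep.rk_mem (hst t).v hi).1
    obtain ⟨b, c⟩ := hH t _ (by omega) hr hc
    have := (hst t).v.2.2.1.injOn b hi c
    exact h3 _ hr hc (by rw [this]; exact ⟨h1, le_rfl⟩)
  have hDstep : ∀ t i, T2 ≤ t → D t i → ∃ i', D (t + 1) i' ∧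
      (s (t + 1)).rk i' ≤ (s t).rk i ∧
      (k ∈ redSet (s t) (s (t + 1)).n (xs t) → (s (t + 1)).rk i' < (s t).rk i) := by
    intro t i ht ⟨h1, h2, h3⟩
    have hm := (hmove t).1
    have hi : i ∈ Set.Icc 1 (s t).n := ⟨le_trans (ha t).1 h1, h2⟩
    obtain ⟨j, hj, hj1, hj2, hj3⟩ := (hst t).cell (y := 2 * i) (by omega) (ha (t + 1)) (by omega)
    have hj' := hj
    simp only [Set.mem_Icc] at hj'
    have hD : D (t + 1) j := by
      refine ⟨hj1, hj.2, fun r hr1 hr2 ⟨e1, e2⟩ => ?_⟩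
      have b := (hH (t + 1) r (by omega) hr1 hr2).1
      simp only [Set.mem_Icc] at b
      have c := ((hst t).le_iff ⟨b.1, by omega⟩ ⟨hj'.1, by omega⟩).2 e2
      rw [hstep t r (by omega) hr1 hr2] at c
      have d := h3 r hr1 hr2
      rcases hst2 r hr1 hr2 with h | h
      · exact d ⟨(h t ht).le, by omega⟩
      · have := h (t + 1) (by omega)
        omega
    have htl := MSStep.til_le (s := s t) hj2 hj3
    rw [MSStep.hatRk_even] at htl
    have hrk := (MSStep.rk_mem (hst t).v hi).2
    have hle1 := (hst t).rk_le_til hj (by omega)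
    refine ⟨j, hD, by omega, fun hred => ?_⟩
    have hkj := hDk (t + 1) j (by omega) hD
    have hne : tildeRk (s t) (xs t) j ≠ k := fun he => hred.2 ⟨j, hj, he⟩
    have := (hst t).rk_lt_til hj (by omega) hk (by omega) hred.2
    omega
  have hfinal : ∀ c t i, T2 ≤ t → D t i → (s t).rk i ≤ c → False := by
    intro c
    induction c with
    | zero =>
      intro t i ht hD hc
      have := hDk t i ht hD
      omega
    | succ c ih =>
      intro t i ht hD hc
      obtain ⟨t', ht', hor⟩ := hinf t
      have : ∃ i', D t' i' ∧ (s t').rk i' ≤ c + 1 := by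
        clear hor
        induction t', ht' using Nat.le_induction with
        | base => exact ⟨i, hD, hc⟩
        | succ t' ht' ih' =>
          obtain ⟨i', hD', hc'⟩ := ih'
          obtain ⟨i'', hD'', hle'', -⟩ := hDstep t' i' (by omega) hD'
          exact ⟨i'', hD'', by omega⟩
      obtain ⟨i', hD', hc'⟩ := this
      rcases hor with hred | hcard
      · obtain ⟨i'', hD'', -, hlt''⟩ := hDstep t' i' (by omega) hD'
        have := hlt'' hred
        exact ih (t' + 1) i'' (by omega) hD'' (by omega)
      · have h1 := hDk t' i' (by omega) hD'
        have h2 := Slice.n_le_card (hst t').v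
        have h3 := (MSStep.rk_mem (hst t').v (i := i') ⟨le_trans (ha t').1 hD'.1, hD'.2.1⟩).2
        omega
  refine hfinal ((s T2).rk (a T2)) T2 (a T2) le_rfl ⟨le_rfl, (ha T2).2, ?_⟩ le_rfl
  rintro r hr1 hr2 ⟨e1, e2⟩
  rcases hst2 r hr1 hr2 with h | h
  · have := h T2 le_rfl
    omega
  · have := h T2 le_rfl
    omega

end Main

/-- Some bounded sequence value occurs infinitely often. -/
theorem exists_inf_often (c : ℕ → ℕ) (K : ℕ) (hc : ∀ t, c t ≤ K) :
    ∃ m, ∀ N, ∃ i, N ≤ i ∧ c i = m := by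
  by_contra h
  push Not at h
  choose f hf using h
  have := hf (c ((Finset.range (K + 1)).sup f)) ((Finset.range (K + 1)).sup f)
    (Finset.le_sup (Finset.mem_range.2 (by have := hc ((Finset.range (K + 1)).sup f); omega)))
  exact this rfl

/-- Values below the least infinitely recurring one eventually disappear. -/
theorem eventually_ge_min (c : ℕ → ℕ) (m : ℕ)
    (h : ∀ m', (∀ N, ∃ i, N ≤ i ∧ c i = m') → m ≤ m') : ∃ T, ∀ t, T ≤ t → m ≤ c t := by
  have h' : ∀ m', m' < m → ∃ N, ∀ i, N ≤ i → c i ≠ m' := by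
    intro m' hm'
    by_contra hc
    push Not at hc
    have := h m' hc
    omega
  choose! f hf using h'
  refine ⟨(Finset.range m).sup f, fun t ht => ?_⟩
  by_contra hc
  push Not at hc
  exact hf (c t) hc t ((Finset.le_sup (Finset.mem_range.2 hc)).trans ht) rfl

theorem reachable_run {P Alp : Type} (B : TDPA P Alp) (w : ℕ → Alp) (t : ℕ) :
    B.Reachable (B.run w t) := by
  induction t with
  | zero => exact ⟨[], rfl⟩
  | succ t ih =>
    obtain ⟨l, hl⟩ := ih
    refine ⟨l ++ [w t], ?_⟩
    rw [List.foldl_append, hl]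
    rfl

theorem mstrans_step {Q Alp : Type} [Fintype Q] {A : NBA Q Alp} {s s' : Slice Q} {x : Alp}
    {c : ℕ} (hv : s.Valid) (h : MSTrans A s x s' c) :
    ∃ xs, MSStep A s x s' xs ∧ ∃ d, (∀ r ∈ greenSet A s x s'.n xs, d ≤ r) ∧
      (∀ r ∈ redSet s s'.n xs, d ≤ r) ∧ 1 ≤ d ∧ d ≤ Fintype.card Q + 1 ∧
      ((d ∈ greenSet A s x s'.n xs ∧ c = 2 * d) ∨
        (d ∉ greenSet A s x s'.n xs ∧ c = 2 * d - 1 ∧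
          (d ∈ redSet s s'.n xs ∨ Fintype.card Q < d))) := by
  obtain ⟨nt, xs, hP, -, -, hpr, hn, hS, hv', hN⟩ := h
  subst hn
  have hstep : MSStep A s x s' xs := by
    refine ⟨hv, hv', hP, fun i hi => ?_, fun i hi j hj hlt => hN i hi j hj ?_⟩
    · rw [hS i hi]
      have : i - 1 + 1 = i := Nat.sub_add_cancel hi.1
      simp [this]
    · have e1 : i - 1 + 1 = i := Nat.sub_add_cancel hi.1
      have e2 : j - 1 + 1 = j := Nat.sub_add_cancel hj.1
      simpa [e1, e2] using hlt
  refine ⟨xs, hstep, domRank (greenSet A s x s'.n xs) (redSet s s'.n xs) (Fintype.card Q), ?_⟩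
  have hbd : ∀ r ∈ greenSet A s x s'.n xs ∪ redSet s s'.n xs,
      1 ≤ r ∧ r ≤ Fintype.card Q + 1 := by
    have hc := Slice.n_le_card hv
    rintro r (⟨-, y, hy, -, rfl⟩ | ⟨⟨y, hy, rfl⟩, -⟩)
    · exact ⟨MSStep.hatRk_pos hv hy.1 hy.2, (MSStep.hatRk_le hv hy.1 hy.2).trans (by omega)⟩
    · exact ⟨MSStep.hatRk_pos hv hy.1 hy.2, (MSStep.hatRk_le hv hy.1 hy.2).trans (by omega)⟩
  by_cases hne : (greenSet A s x s'.n xs ∪ redSet s s'.n xs).Nonempty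
  · have hd : domRank (greenSet A s x s'.n xs) (redSet s s'.n xs) (Fintype.card Q)
        = sInf (greenSet A s x s'.n xs ∪ redSet s s'.n xs) := if_pos hne
    have hm := Nat.sInf_mem hne
    have hle : ∀ r ∈ greenSet A s x s'.n xs ∪ redSet s s'.n xs,
      sInf (greenSet A s x s'.n xs ∪ redSet s s'.n xs) ≤ r := fun r hr => Nat.sInf_le hr
    rw [← hd] at hm hle
    refine ⟨fun r hr => hle r (Or.inl hr), fun r hr => hle r (Or.inr hr), (hbd _ hm).1,
      (hbd _ hm).2, ?_⟩
    rcases hpr with h | ⟨h1, h2⟩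
    · exact Or.inl h
    · exact Or.inr ⟨h1, h2, Or.inl (hm.resolve_left h1)⟩
  · have hd : domRank (greenSet A s x s'.n xs) (redSet s s'.n xs) (Fintype.card Q)
        = Fintype.card Q + 1 := if_neg hne
    rw [Set.not_nonempty_iff_eq_empty, Set.union_empty_iff] at hne
    rw [hd] at hpr ⊢
    rw [hne.1] at hpr ⊢
    rw [hne.2]
    refine ⟨fun r hr => absurd hr (Set.notMem_empty r), fun r hr => absurd hr (Set.notMem_empty r),
      by omega, le_rfl, ?_⟩
    rcases hpr with h | ⟨h1, h2⟩
    · exact absurd h.1 (Set.notMem_empty _)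
    · exact Or.inr ⟨h1, h2, Or.inr (by omega)⟩

/-- For an NBA `A` with nonempty initial set, any TDPA `B` obtained by
the Muller-Schupp construction recognizes the same language: `L(B) = L(A)`. -/
theorem mullerSchupp_correct {Q Alp : Type} [Fintype Q] (A : NBA Q Alp)
    (hQ0 : A.Q0.Nonempty) (B : TDPA (Slice Q) Alp) (hB : ObtainedMS A B) :
    {w : ℕ → Alp | B.Accepts w} = {w : ℕ → Alp | A.Accepts w} := by
  obtain ⟨hp1, hp2, hp3, hB⟩ := hB
  ext w
  simp only [Set.mem_ofPred_eq]
  have hv : ∀ t, (B.run w t).Valid := by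
    intro t
    cases t with
    | zero =>
      change B.p0.Valid
      have hone : ∀ i, i ∈ Set.Icc 1 B.p0.n → i = 1 := by
        intro i hi
        rw [hp1] at hi
        exact le_antisymm hi.2 hi.1
      refine ⟨fun i hi => ?_, fun i hi j hj hij => ?_, ?_, fun _ => by rw [hp1, hp3]⟩
      · rw [hone i hi, hp2]
        exact hQ0
      · exact absurd ((hone i hi).trans (hone j hj).symm) hij
      · rw [hp1, Set.Icc_self]
        refine ⟨?_, ?_, ?_⟩
        · rintro i rfl
          exact hp3
        · rintro i rfl j rfl _
          rfl
        · rintro i rfl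
          exact ⟨1, rfl, hp3⟩
    | succ t =>
      obtain ⟨nt, xs, -, -, -, -, -, -, h, -⟩ := hB _ (reachable_run B w t) (w t)
      exact h
  have hstep := fun t => mstrans_step (hv t) (hB _ (reachable_run B w t) (w t))
  choose xs hst d hdG hdR hd1 hdc hpr using hstep
  constructor
  · rintro ⟨m, hm1, hm2, hme⟩
    obtain ⟨T, hT⟩ := eventually_ge_min _ m hm2
    obtain ⟨k, hk⟩ := hme
    have hk2 : m = 2 * k := by omega
    have hgreen : ∀ N, ∃ t, N ≤ t ∧
        k ∈ greenSet A (B.run w t) (w t) (B.run w (t + 1)).n (xs t) := by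
      intro N
      obtain ⟨t, ht, hc⟩ := hm1 N
      refine ⟨t, ht, ?_⟩
      have := hd1 t
      rcases hpr t with ⟨h1, h2⟩ | ⟨h1, h2, -⟩
      · have : d t = k := by omega
        rw [← this]
        exact h1
      · omega
    have hk1 : 1 ≤ k := by
      obtain ⟨t, ht, hg⟩ := hgreen 0
      exact (hd1 t).trans (hdG t k hg)
    refine ms_sound (s := B.run w) (xs := xs) hst hp1 hp2 k hk1 T ?_ hgreen
    intro t ht r hr hred
    have h1 := hdR t r hred
    have h2 := hT t ht
    have h3 := hd1 t
    rcases hpr t with ⟨h4, h5⟩ | ⟨h4, h5, -⟩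
    · have : d t = r := by omega
      rw [this] at h4
      exact hred.2 h4.1
    · omega
  · intro hacc
    have hbd : ∀ t, B.c (B.run w t) (w t) ≤ 2 * (Fintype.card Q + 1) := by
      intro t
      have := hdc t
      rcases hpr t with ⟨_, h⟩ | ⟨_, h, -⟩ <;> omega
    classical
    have hex := exists_inf_often _ _ hbd
    have hm := Nat.find_spec hex
    have hmin := fun m' h => Nat.find_min' hex (m := m') h
    generalize Nat.find hex = m at *
    refine ⟨m, hm, hmin, ?_⟩
    by_contra hodd
    rw [Nat.not_even_iff_odd] at hodd
    obtain ⟨k, hk⟩ := hodd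
    obtain ⟨T, hT⟩ := eventually_ge_min _ m hmin
    have hge : ∀ t, T ≤ t → k + 1 ≤ d t := by
      intro t ht
      have h2 := hT t ht
      rcases hpr t with ⟨_, h⟩ | ⟨_, h, -⟩ <;> omega
    refine ms_complete (s := B.run w) (xs := xs) hst hp1 hp2 (k + 1) (by omega) T ?_ ?_ ?_ hacc
    · intro t ht r hr hred
      have h1 := hge t ht
      have h2 := hdR t r hred
      omega
    · intro t ht r hr hgr
      have h1 := hge t ht
      have h2 := hdG t r hgr
      omega
    · intro N
      obtain ⟨t, ht, hc⟩ := hm N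
      refine ⟨t, ht, ?_⟩
      have := hd1 t
      rcases hpr t with ⟨_, h⟩ | ⟨_, h, hor⟩
      · omega
      · have : d t = k + 1 := by omega
        rwa [this] at hor
end

section
/- Let A = (Q, Σ, Δ, Q₀, F) be a nondeterministic Büchi automaton with Q₀ ≠ ∅, and let B be any transition-based deterministic parity automaton obtained from the unified construction for A (with arbitrary choices of valid merge partitions in each transition). Then L(B) = L(A). -/
/-! Core definitions: NBA, TDPA, ranked slices, and the unified
determinization construction. -/

universe u v

variable {Q : Type u} {Alp : Type v}

namespace UC

theorem idx_eq {s : Slice Q} (hv : s.Valid) {q : Q} {a : ℕ} (ha : a ∈ Set.Icc 1 s.n)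
    (hq : q ∈ s.S a) : s.idx q = a := by
  have : {i | 1 ≤ i ∧ i ≤ s.n ∧ q ∈ s.S i} = {a} := by
    ext i
    constructor
    · rintro ⟨h1, h2, h3⟩
      by_contra hne
      exact Set.disjoint_left.1 (hv.2.1 i ⟨h1, h2⟩ a ha hne) h3 hq
    · rintro rfl
      exact ⟨ha.1, ha.2, hq⟩
  rw [Slice.idx, this]
  simp

/-- `q` occurs in the slice. -/
def In (s : Slice Q) (q : Q) : Prop := ∃ a ∈ Set.Icc 1 s.n, q ∈ s.S a

theorem In.idx_mem {s : Slice Q} {q : Q} (hv : s.Valid) (h : In s q) :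
    s.idx q ∈ Set.Icc 1 s.n ∧ q ∈ s.S (s.idx q) := by
  obtain ⟨a, ha, hq⟩ := h
  rw [idx_eq hv ha hq]
  exact ⟨ha, hq⟩

/-- `q` occurs at position `h` after the step stage. -/
def Hat (A : NBA Q Alp) (s : Slice Q) (x : Alp) (q : Q) (h : ℕ) : Prop :=
  h ∈ Set.Icc 1 (2 * s.n) ∧ q ∈ hatS A s x h

theorem hat_of_delta {A : NBA Q Alp} {s : Slice Q} {x : Alp} (hv : s.Valid) {q q' : Q} {a : ℕ}
    (ha : a ∈ Set.Icc 1 s.n) (hq : q ∈ s.S a) (hd : q' ∈ A.delta q x) :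
    ∃ h, Hat A s x q' h ∧ h ≤ 2 * a ∧ (q' ∈ A.F → h < 2 * a) := by
  classical
  have hex : ∃ a0, a0 ∈ Set.Icc 1 s.n ∧ ∃ q0 ∈ s.S a0, q' ∈ A.delta q0 x := ⟨a, ha, q, hq, hd⟩
  obtain ⟨h0, q0, hq0, hd0⟩ := Nat.find_spec hex
  have hle : Nat.find hex ≤ a := Nat.find_min' hex ⟨ha, q, hq, hd⟩
  have hmin : ∀ c, c < Nat.find hex → ¬ (c ∈ Set.Icc 1 s.n ∧ ∃ q0 ∈ s.S c, q' ∈ A.delta q0 x) :=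
    fun c hc => Nat.find_min hex hc
  generalize Nat.find hex = a0 at *
  have hT : q' ∈ dTs A s (s.S a0) x := by
    refine Set.mem_biUnion hq0 ⟨hd0, ?_⟩
    rw [idx_eq hv h0 hq0]
    intro hmem
    simp only [NBA.nextSet, Set.mem_iUnion] at hmem
    obtain ⟨p, ⟨c, hc, hp⟩, hpd⟩ := hmem
    exact hmin c hc.2 ⟨⟨hc.1, by have := h0.2; have := hc.2; omega⟩, p, hp, hpd⟩
  obtain ⟨h01, h02⟩ := h0
  by_cases hF : q' ∈ A.F
  · refine ⟨2 * a0 - 1, ⟨⟨by omega, by omega⟩, ?_⟩, by omega, fun _ => by omega⟩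
    rw [hatS, if_pos (by omega), show (2 * a0 - 1 + 1) / 2 = a0 by omega]
    exact ⟨hT, hF⟩
  · refine ⟨2 * a0, ⟨⟨by omega, by omega⟩, ?_⟩, by omega, fun h => absurd h hF⟩
    rw [hatS, if_neg (by omega), show (2 * a0) / 2 = a0 by omega]
    exact ⟨hT, hF⟩

theorem delta_of_hat {A : NBA Q Alp} {s : Slice Q} {x : Alp} {q' : Q} {h : ℕ}
    (hh : Hat A s x q' h) : ∃ a ∈ Set.Icc 1 s.n, ∃ q ∈ s.S a, q' ∈ A.delta q x ∧
      ((h = 2 * a - 1 ∧ q' ∈ A.F) ∨ (h = 2 * a ∧ q' ∉ A.F)) := by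
  obtain ⟨⟨h1, h2⟩, hm⟩ := hh
  rw [hatS] at hm
  split_ifs at hm with hp
  · obtain ⟨hm, hF⟩ := hm
    simp only [dTs, Set.mem_iUnion] at hm
    obtain ⟨q, hq, hd⟩ := hm
    exact ⟨(h + 1) / 2, ⟨by omega, by omega⟩, q, hq, hd.1, Or.inl ⟨by omega, hF⟩⟩
  · obtain ⟨hm, hF⟩ := hm
    simp only [dTs, Set.mem_iUnion] at hm
    obtain ⟨q, hq, hd⟩ := hm
    exact ⟨h / 2, ⟨by omega, by omega⟩, q, hq, hd.1, Or.inr ⟨by omega, hF⟩⟩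

theorem n_le_card [Fintype Q] {s : Slice Q} (hv : s.Valid) : s.n ≤ Fintype.card Q := by
  classical
  have hex : ∀ i : ℕ, i ∈ Finset.Icc 1 s.n → ∃ q, q ∈ s.S i := fun i hi =>
    hv.1 i (by simpa using hi)
  choose f hf using hex
  have := Finset.card_le_card_of_injOn (s := (Finset.Icc 1 s.n).attach) (t := Finset.univ)
    (fun i => f i.1 i.2) (fun _ _ => by simp) (by
      intro i _ j _ hij
      have h1 := idx_eq hv (a := i.1) (Finset.mem_Icc.1 i.2) (hf i.1 i.2)
      have h2 := idx_eq hv (a := j.1) (Finset.mem_Icc.1 j.2) (hf j.1 j.2)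
      simp only at hij
      rw [hij] at h1
      exact Subtype.ext (h1.symm.trans h2))
  simpa using this

section prune

variable {A : NBA Q Alp} {s : Slice Q} {x : Alp} {nt : ℕ} {xs : ℕ → ℕ}

theorem prune_sm (hp : IsPrune A s x nt xs) : StrictMonoOn xs (Set.Icc 1 (nt + 1)) := by
  intro i hi j hj hij
  obtain ⟨h1, h2, -, h4⟩ := hp
  obtain ⟨hi1, hi2⟩ := hi
  obtain ⟨hj1, hj2⟩ := hj
  by_cases h : j ≤ nt
  · exact h1 ⟨hi1, by omega⟩ ⟨hj1, h⟩ hij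
  · obtain rfl : j = nt + 1 := by omega
    have := (h2 i ⟨hi1, by omega⟩).1.2
    omega

theorem prune_cover (hp : IsPrune A s x nt xs) {l0 h : ℕ} (hl0 : l0 ∈ Set.Icc 1 nt)
    (hx : xs l0 ≤ h) (hh : h ≤ 2 * s.n) :
    ∃ l ∈ Set.Icc 1 nt, xs l ≤ h ∧ h < xs (l + 1) := by
  by_contra hcon
  push Not at hcon
  have key : ∀ d, l0 + d ≤ nt + 1 → xs (l0 + d) ≤ h := by
    intro d
    induction d with
    | zero => intro _; exact hx
    | succ d ih =>
      intro hd
      exact hcon (l0 + d) ⟨by have := hl0.1; omega, by omega⟩ (ih (by omega))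
  have := key (nt + 1 - l0) (by have := hl0.2; omega)
  rw [show l0 + (nt + 1 - l0) = nt + 1 by have := hl0.2; omega, hp.2.2.2] at this
  omega

theorem hatRk_bd (hv : s.Valid) {j : ℕ} (hj : j ∈ Set.Icc 1 (2 * s.n)) :
    1 ≤ hatRk s j ∧ hatRk s j ≤ s.n + 1 := by
  obtain ⟨h1, h2⟩ := hj
  rw [hatRk]
  split_ifs with h
  · omega
  · have := hv.2.2.1.mapsTo (x := j / 2) ⟨by omega, by omega⟩
    simp only [Set.mem_Icc] at this
    omega

theorem hatRk_two (c : ℕ) : hatRk s (2 * c) = s.rk c := by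
  rw [hatRk, if_neg (by omega), show 2 * c / 2 = c by omega]

theorem hatRk_eq (hv : s.Valid) {j c : ℕ} (hj : j ∈ Set.Icc 1 (2 * s.n))
    (hc : c ∈ Set.Icc 1 s.n) (h : hatRk s j = s.rk c) : j = 2 * c := by
  obtain ⟨h1, h2⟩ := hj
  have hm := hv.2.2.1.mapsTo hc
  simp only [Set.mem_Icc] at hm
  rw [hatRk] at h
  split_ifs at h with h'
  · omega
  · have := hv.2.2.1.injOn (x₁ := j / 2) ⟨by omega, by omega⟩ hc h
    omega

theorem tilde_spec (hp : IsPrune A s x nt xs) {l : ℕ} (hl : l ∈ Set.Icc 1 nt) :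
    ∃ j ∈ Set.Icc 1 (2 * s.n), xs l ≤ j ∧ j < xs (l + 1) ∧ hatRk s j = tildeRk s xs l := by
  obtain ⟨hl1, hl2⟩ := hl
  have hlt : xs l < xs (l + 1) :=
    prune_sm hp ⟨hl1, by omega⟩ ⟨by omega, by omega⟩ (by omega)
  have hne : (hatRk s '' {j | xs l ≤ j ∧ j < xs (l + 1)}).Nonempty :=
    ⟨_, xs l, ⟨le_refl _, hlt⟩, rfl⟩
  obtain ⟨j, ⟨hj1, hj2⟩, hj⟩ := Nat.sInf_mem hne
  have h1 := (hp.2.1 l ⟨hl1, hl2⟩).1.1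
  have h2 : xs (l + 1) ≤ xs (nt + 1) :=
    (prune_sm hp).monotoneOn ⟨by omega, by omega⟩ ⟨by omega, by omega⟩ (by omega)
  rw [hp.2.2.2] at h2
  exact ⟨j, ⟨by omega, by omega⟩, hj1, hj2, hj⟩

theorem tilde_le {l j : ℕ} (h1 : xs l ≤ j) (h2 : j < xs (l + 1)) :
    tildeRk s xs l ≤ hatRk s j := Nat.sInf_le ⟨j, ⟨h1, h2⟩, rfl⟩

theorem tilde_bd (hv : s.Valid) (hp : IsPrune A s x nt xs) {l : ℕ} (hl : l ∈ Set.Icc 1 nt) :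
    1 ≤ tildeRk s xs l ∧ tildeRk s xs l ≤ s.n + 1 := by
  obtain ⟨j, hj, -, -, h⟩ := tilde_spec hp hl
  rw [← h]
  exact hatRk_bd hv hj

theorem tilde_pos (hv : s.Valid) (hp : IsPrune A s x nt xs) {l c : ℕ} (hl : l ∈ Set.Icc 1 nt)
    (hc : c ∈ Set.Icc 1 s.n) (h : tildeRk s xs l = s.rk c) :
    xs l ≤ 2 * c ∧ 2 * c < xs (l + 1) := by
  obtain ⟨j, hj, h1, h2, h3⟩ := tilde_spec hp hl
  obtain rfl := hatRk_eq hv hj hc (h3.trans h)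
  exact ⟨h1, h2⟩

theorem prune_uniq (hp : IsPrune A s x nt xs) {l l' h : ℕ} (hl : l ∈ Set.Icc 1 nt)
    (hl' : l' ∈ Set.Icc 1 nt) (h1 : xs l ≤ h) (h2 : h < xs (l' + 1)) : l ≤ l' := by
  by_contra hcon
  have : xs (l' + 1) ≤ xs l := (prune_sm hp).monotoneOn
    ⟨by omega, by have := hl'.2; omega⟩ ⟨hl.1, by have := hl.2; omega⟩ (by omega)
  omega

theorem tilde_inj (hv : s.Valid) (hp : IsPrune A s x nt xs) {l l' : ℕ} (hl : l ∈ Set.Icc 1 nt)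
    (hl' : l' ∈ Set.Icc 1 nt) (hn : tildeRk s xs l ≤ s.n)
    (h : tildeRk s xs l = tildeRk s xs l') : l = l' := by
  obtain ⟨c, hc, hcr⟩ := hv.2.2.1.surjOn (⟨(tilde_bd hv hp hl).1, hn⟩ : _ ∈ Set.Icc 1 s.n)
  obtain ⟨a1, a2⟩ := tilde_pos hv hp hl hc hcr.symm
  obtain ⟨b1, b2⟩ := tilde_pos hv hp hl' hc (h.symm.trans hcr.symm)
  exact le_antisymm (prune_uniq hp hl hl' a1 b2) (prune_uniq hp hl' hl b1 a2)

/-- The dominating rank of a transition. -/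
noncomputable def dk [Fintype Q] (A : NBA Q Alp) (s : Slice Q) (x : Alp) (nt : ℕ) (xs : ℕ → ℕ) : ℕ :=
  domRank (greenSet A s x nt xs) (redSet s nt xs) (Fintype.card Q)


theorem dk_le [Fintype Q] {r : ℕ} (h : r ∈ greenSet A s x nt xs ∪ redSet s nt xs) : dk A s x nt xs ≤ r := by
  rw [dk, domRank, if_pos ⟨r, h⟩]
  exact Nat.sInf_le h

theorem dk_cases [Fintype Q] : dk A s x nt xs ∈ greenSet A s x nt xs ∨ dk A s x nt xs ∈ redSet s nt xs ∨
    dk A s x nt xs = Fintype.card Q + 1 := by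
  rw [dk, domRank]
  split_ifs with h
  · rcases Nat.sInf_mem h with h | h
    · exact Or.inl h
    · exact Or.inr (Or.inl h)
  · exact Or.inr (Or.inr rfl)

theorem green_bd (hv : s.Valid) {r : ℕ} (h : r ∈ greenSet A s x nt xs) : 1 ≤ r ∧ r ≤ s.n + 1 := by
  obtain ⟨-, j, hj, -, rfl⟩ := h
  exact hatRk_bd hv hj

theorem red_bd (hv : s.Valid) {r : ℕ} (h : r ∈ redSet s nt xs) : 1 ≤ r ∧ r ≤ s.n + 1 := by
  obtain ⟨⟨j, hj, rfl⟩, -⟩ := h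
  exact hatRk_bd hv hj

theorem dk_bd [Fintype Q] (hv : s.Valid) : 1 ≤ dk A s x nt xs ∧ dk A s x nt xs ≤ Fintype.card Q + 1 := by
  have := n_le_card hv
  rcases dk_cases (A := A) (s := s) (x := x) (nt := nt) (xs := xs) with h | h | h
  · have := green_bd hv h; omega
  · have := red_bd hv h; omega
  · omega

end prune

section merge

theorem part_cover {nt n' : ℕ} {b : ℕ → ℕ} (hb : IsIntervalPartition nt n' b) {l : ℕ}
    (hl : l ∈ Set.Icc 1 nt) : ∃ j ∈ Set.Icc 1 n', l ∈ Set.Icc (b (j - 1) + 1) (b j) := by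
  classical
  obtain ⟨h0, h1, h2⟩ := hb
  obtain ⟨hl1, hl2⟩ := hl
  have hex : ∃ j, l ≤ b j := ⟨n', by omega⟩
  have hs := Nat.find_spec hex
  have hle : Nat.find hex ≤ n' := Nat.find_min' hex (by omega)
  have hmin : ∀ c, c < Nat.find hex → ¬ l ≤ b c := fun c hc => Nat.find_min hex hc
  generalize Nat.find hex = j at *
  have hj : j ≠ 0 := by rintro rfl; omega
  have := hmin (j - 1) (by omega)
  exact ⟨j, ⟨by omega, hle⟩, by omega, hs⟩

theorem part_le {nt n' : ℕ} {b : ℕ → ℕ} (hb : IsIntervalPartition nt n' b) {l l' j j' : ℕ}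
    (hj : j ∈ Set.Icc 1 n') (hj' : j' ∈ Set.Icc 1 n') (hl : b (j - 1) + 1 ≤ l)
    (hl' : l' ≤ b j') (h : l ≤ l') : j ≤ j' := by
  by_contra hcon
  obtain ⟨hj1, hj2⟩ := hj
  have := hb.2.2.monotoneOn (a := j') (b := j - 1) ⟨by omega, hj'.2⟩ ⟨by omega, by omega⟩ (by omega)
  omega

theorem part_sub {nt n' : ℕ} {b : ℕ → ℕ} (hb : IsIntervalPartition nt n' b) {l j : ℕ}
    (hj : j ∈ Set.Icc 1 n') (hl : l ∈ Set.Icc (b (j - 1) + 1) (b j)) : l ∈ Set.Icc 1 nt := by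
  obtain ⟨hj1, hj2⟩ := hj
  obtain ⟨hl1, hl2⟩ := hl
  have := hb.2.2.monotoneOn (a := j) (b := n') ⟨by omega, hj2⟩ ⟨by omega, le_refl _⟩ hj2
  rw [hb.2.1] at this
  exact ⟨by omega, by omega⟩

/-- The ranking after the merge stage. -/
noncomputable def ck (s : Slice Q) (xs b : ℕ → ℕ) (j : ℕ) : ℕ :=
  sInf (tildeRk s xs '' Set.Icc (b (j - 1) + 1) (b j))

theorem ck_le {s : Slice Q} {xs b : ℕ → ℕ} {l j : ℕ} (hl : l ∈ Set.Icc (b (j - 1) + 1) (b j)) :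
    ck s xs b j ≤ tildeRk s xs l := Nat.sInf_le ⟨l, hl, rfl⟩

theorem ck_spec {s : Slice Q} {xs : ℕ → ℕ} {nt n' : ℕ} {b : ℕ → ℕ}
    (hb : IsIntervalPartition nt n' b) {j : ℕ} (hj : j ∈ Set.Icc 1 n') :
    ∃ l ∈ Set.Icc (b (j - 1) + 1) (b j), tildeRk s xs l = ck s xs b j := by
  obtain ⟨hj1, hj2⟩ := hj
  have := hb.2.2 (show j - 1 ∈ Set.Icc 0 n' from ⟨by omega, by omega⟩)
    (show j ∈ Set.Icc 0 n' from ⟨by omega, by omega⟩) (by omega)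
  have hne : (tildeRk s xs '' Set.Icc (b (j - 1) + 1) (b j)).Nonempty :=
    ⟨_, b j, ⟨by omega, le_refl _⟩, rfl⟩
  exact Nat.sInf_mem hne

theorem ck_eq {s : Slice Q} {xs : ℕ → ℕ} {nt n' k : ℕ} {b : ℕ → ℕ}
    (hb : IsIntervalPartition nt n' b) (hm : MergeConstraints n' b (tildeRk s xs) k) {l j : ℕ}
    (hj : j ∈ Set.Icc 1 n') (hl : l ∈ Set.Icc (b (j - 1) + 1) (b j)) (hk : tildeRk s xs l ≤ k) :
    ck s xs b j = tildeRk s xs l := by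
  apply le_antisymm (ck_le hl)
  obtain ⟨l', hl', h⟩ := ck_spec (s := s) (xs := xs) hb hj
  rw [← h]
  by_contra hcon
  have h1 := (hm j hj l' hl').1 (by omega)
  have : l = l' := by
    have := hl.1; have := hl.2; have := hl'.1; have := hl'.2; omega
  subst this
  omega

/-- When the dominating rank is green and present in the slice, its right child is empty. -/
theorem green_empty {A : NBA Q Alp} {s : Slice Q} {x : Alp} {nt : ℕ} {xs : ℕ → ℕ} (hv : s.Valid) {c r : ℕ} (hc : c ∈ Set.Icc 1 s.n) (hr : s.rk c = r)
    (hG : r ∈ greenSet A s x nt xs) : hatS A s x (2 * c) = ∅ := by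
  obtain ⟨-, j, hj, he, hjr⟩ := hG
  obtain rfl := hatRk_eq hv hj hc (hjr.trans hr.symm)
  exact he

variable [Fintype Q] {A : NBA Q Alp} {s s' : Slice Q} {x : Alp} {pr nt n' : ℕ} {xs b : ℕ → ℕ}

/-- Ranks up to `k`, all of which survive, keep their values. -/
theorem norm_rank (hv : s.Valid) (tr : TransVia A s x s' pr nt xs n' b) :
    ∀ r, r ≤ dk A s x nt xs → r ≤ s.n →
    (∀ r', 1 ≤ r' → r' ≤ r → ∃ l ∈ Set.Icc 1 nt, tildeRk s xs l = r') →
    ∀ l j, l ∈ Set.Icc 1 nt → j ∈ Set.Icc 1 n' → l ∈ Set.Icc (b (j - 1) + 1) (b j) →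
    tildeRk s xs l = r → s'.rk j = r := by
  obtain ⟨hp, hb, hm, -, hn, -, hv', hnorm⟩ := tr
  have hbij := hv'.2.2.1
  rw [hn] at hbij
  change MergeConstraints n' b (tildeRk s xs) (dk A s x nt xs) at hm
  intro r
  induction r using Nat.strong_induction_on with
  | _ r ih =>
    intro hk hrn hall l j hl hj hlj htl
    have hck := ck_eq hb hm hj hlj (by omega)
    have hr1 := (tilde_bd hv hp hl).1
    have hge : r ≤ s'.rk j := by
      by_contra hcon
      have hrpos : 1 ≤ s'.rk j := (hbij.mapsTo hj).1
      obtain ⟨l2, hl2, ht2⟩ := hall (s'.rk j) hrpos (by omega)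
      obtain ⟨j2, hj2, hlj2⟩ := part_cover hb hl2
      have h2 := ih (s'.rk j) (by omega) (by omega) (by omega)
        (fun r' h1 h2 => hall r' h1 (by omega)) l2 j2 hl2 hj2 hlj2 ht2
      have := hbij.injOn hj2 hj h2
      subst this
      have := ck_eq hb hm hj hlj2 (by omega)
      omega
    by_contra hne
    have hrn' : r ≤ n' := hge.trans (hbij.mapsTo hj).2
    obtain ⟨j2, hj2, hr2⟩ := hbij.surjOn (⟨by omega, hrn'⟩ : r ∈ Set.Icc 1 n')
    have hle : ck s xs b j2 ≤ ck s xs b j := by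
      by_contra hcon
      have := hnorm j hj j2 hj2 (by unfold ck at hcon; omega)
      omega
    obtain ⟨l2, hlj2, ht2⟩ := ck_spec (s := s) (xs := xs) hb hj2
    have hl2 := part_sub hb hj2 hlj2
    rcases Nat.lt_or_ge (tildeRk s xs l2) r with hlt | hge2
    · have := ih (tildeRk s xs l2) hlt (by omega) (by omega)
        (fun r' h1 h2 => hall r' h1 (by omega)) l2 j2 hl2 hj2 hlj2 rfl
      omega
    · have := tilde_inj hv hp hl hl2 (by omega) (by omega)
      subst this
      have h1 := part_le hb hj hj2 hlj.1 hlj2.2 le_rfl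
      have h2 := part_le hb hj2 hj hlj2.1 hlj.2 le_rfl
      have : j = j2 := by omega
      subst this
      omega

theorem hat_pos (tr : TransVia A s x s' pr nt xs n' b) {q : Q} {h : ℕ} (hh : Hat A s x q h) :
    ∃ l ∈ Set.Icc 1 nt, xs l = h ∧ ∃ j ∈ Set.Icc 1 n', l ∈ Set.Icc (b (j - 1) + 1) (b j) ∧
      q ∈ s'.S j ∧ s'.idx q = j := by
  obtain ⟨hp, hb, hm, -, hn, hS, hv', -⟩ := tr
  obtain ⟨l, hl, hxl⟩ := hp.2.2.1 h hh.1 ⟨q, hh.2⟩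
  obtain ⟨j, hj, hlj⟩ := part_cover hb hl
  have hq : q ∈ s'.S j := by
    rw [hS j hj]
    exact Set.mem_biUnion hlj (by rw [hxl]; exact hh.2)
  exact ⟨l, hl, hxl, j, hj, hlj, hq, idx_eq hv' (by rw [hn]; exact hj) hq⟩

theorem hat_in (tr : TransVia A s x s' pr nt xs n' b) {q : Q} {h : ℕ} (hh : Hat A s x q h) :
    In s' q := by
  obtain ⟨l, hl, hxl, j, hj, hlj, hq, -⟩ := hat_pos tr hh
  exact ⟨j, by rw [tr.2.2.2.2.1]; exact hj, hq⟩

theorem in_hat (tr : TransVia A s x s' pr nt xs n' b) {q : Q} (hq : In s' q) :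
    ∃ h, Hat A s x q h := by
  obtain ⟨hp, hb, hm, -, hn, hS, hv', -⟩ := tr
  obtain ⟨j, hj, hq⟩ := hq
  rw [hn] at hj
  rw [hS j hj] at hq
  simp only [Set.mem_iUnion] at hq
  obtain ⟨l, hl, hq⟩ := hq
  exact ⟨xs l, (hp.2.1 l (part_sub hb hj hl)).1, hq⟩

theorem hat_mono (tr : TransVia A s x s' pr nt xs n' b) {q1 q2 : Q} {h1 h2 : ℕ}
    (hh1 : Hat A s x q1 h1) (hh2 : Hat A s x q2 h2) (hle : h1 ≤ h2) :
    s'.idx q1 ≤ s'.idx q2 := by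
  obtain ⟨l1, hl1, rfl, j1, hj1, hlj1, -, e1⟩ := hat_pos tr hh1
  obtain ⟨l2, hl2, rfl, j2, hj2, hlj2, -, e2⟩ := hat_pos tr hh2
  rw [e1, e2]
  refine part_le tr.2.1 hj1 hj2 hlj1.1 hlj2.2 ?_
  by_contra hcon
  have := tr.1.1 hl2 hl1 (by omega)
  omega

/-- A surviving rank of value at most `k`. -/
theorem step_rank (hv : s.Valid) (tr : TransVia A s x s' pr nt xs n' b) {c : ℕ}
    (hc : c ∈ Set.Icc 1 s.n) (hk : s.rk c ≤ dk A s x nt xs) (hR : s.rk c ∉ redSet s nt xs) :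
    ∃ c' ∈ Set.Icc 1 s'.n, s'.rk c' = s.rk c ∧
      (∀ q h, Hat A s x q h → 2 * c < h → c' < s'.idx q) ∧
      (∀ q h, Hat A s x q h → h ≤ 2 * c → s'.idx q ≤ c') ∧
      (s.rk c < dk A s x nt xs → ∀ q h, Hat A s x q h → h < 2 * c → s'.idx q < c') := by
  have hnr := norm_rank hv tr
  have hpos := fun q h => hat_pos (q := q) (h := h) tr
  obtain ⟨hp, hb, hm, -, hn, hS, hv', -⟩ := tr
  change MergeConstraints n' b (tildeRk s xs) (dk A s x nt xs) at hm
  have hrc := hv.2.2.1.mapsTo hc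
  obtain ⟨hrc1, hrc2⟩ := hrc
  obtain ⟨hc1, hc2⟩ := hc
  have himg : ∀ r', 1 ≤ r' → r' ≤ s.rk c → ∃ l ∈ Set.Icc 1 nt, tildeRk s xs l = r' := by
    intro r' h1 h2
    by_contra hcon
    obtain ⟨c2, hc2', hcr⟩ := hv.2.2.1.surjOn (⟨h1, by omega⟩ : r' ∈ Set.Icc 1 s.n)
    have hred : r' ∈ redSet s nt xs := by
      refine ⟨⟨2 * c2, ⟨by have := hc2'.1; omega, by have := hc2'.2; omega⟩, ?_⟩, hcon⟩
      rw [hatRk_two, hcr]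
    have := dk_le (A := A) (x := x) (Or.inr hred)
    have : r' = s.rk c := by omega
    subst this
    exact hR hred
  obtain ⟨l, hl, htl⟩ := himg _ hrc1 le_rfl
  obtain ⟨j, hj, hlj⟩ := part_cover hb hl
  obtain ⟨hx1, hx2⟩ := tilde_pos hv hp hl ⟨hc1, hc2⟩ htl
  have hmax : l = b j := by
    rcases hk.lt_or_eq with h | h
    · have := (hm j hj l hlj).1 (by omega)
      have := hlj.1; have := hlj.2; omega
    · exact (hm j hj l hlj).2 (by omega)
  refine ⟨j, by rw [hn]; exact hj, hnr _ hk hrc2 himg l j hl hj hlj htl, ?_, ?_, ?_⟩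
  · intro q h hh hlt
    obtain ⟨l', hl', hxl', j', hj', hlj', -, e⟩ := hpos q h hh
    rw [e]
    by_contra hcon
    have h1 : l' ≤ l := by
      have : l' ≤ b j' := hlj'.2
      have := hb.2.2.monotoneOn (a := j') (b := j) ⟨by omega, hj'.2⟩ ⟨by omega, hj.2⟩ (by omega)
      omega
    have := hp.1.monotoneOn hl' hl h1
    omega
  · intro q h hh hle
    obtain ⟨l', hl', hxl', j', hj', hlj', -, e⟩ := hpos q h hh
    rw [e]
    exact part_le hb hj' hj hlj'.1 hlj.2 (prune_uniq hp hl' hl (h := 2 * c) (by omega) hx2)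
  · intro hlt q h hh hle
    obtain ⟨l', hl', hxl', j', hj', hlj', -, e⟩ := hpos q h hh
    rw [e]
    have hne : (hatS A s x (2 * c)).Nonempty := by
      by_contra hcon
      rw [Set.not_nonempty_iff_eq_empty] at hcon
      have : s.rk c ∈ greenSet A s x nt xs :=
        ⟨⟨l, hl, htl⟩, 2 * c, ⟨by omega, by omega⟩, hcon, hatRk_two c⟩
      have := dk_le (Or.inl this : s.rk c ∈ greenSet A s x nt xs ∪ redSet s nt xs)
      omega
    obtain ⟨l2, hl2, hxl2⟩ := hp.2.2.1 (2 * c) ⟨by omega, by omega⟩ hne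
    have h12 : l2 ≤ l := prune_uniq hp hl2 hl (h := 2 * c) (by omega) hx2
    have h21 : l ≤ l2 := prune_uniq hp hl hl2 (h := 2 * c) hx1 (by
      rw [← hxl2]
      exact prune_sm hp ⟨hl2.1, by have := hl2.2; omega⟩ ⟨by omega, by have := hl2.2; omega⟩
        (by omega))
    have : l = l2 := by omega
    subst this
    have hl'l : l' < l := by
      by_contra hcon
      have := hp.1.monotoneOn hl hl' (by omega)
      omega
    have hsing := (hm j hj l hlj).1 (by omega)
    by_contra hcon
    have := part_le hb (j := j) (j' := j') hj hj' hlj.1 hlj'.2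
    have hmono := hb.2.2.monotoneOn (a := j - 1) (b := j' - 1) ⟨by omega, by have := hj.2; omega⟩
      ⟨by omega, by have := hj'.2; omega⟩ (by omega)
    have := hlj'.1
    omega

/-- After a green event the dominating rank is present. -/
theorem birth (hv : s.Valid) (tr : TransVia A s x s' pr nt xs n' b)
    (hG : dk A s x nt xs ∈ greenSet A s x nt xs) :
    ∃ c' ∈ Set.Icc 1 s'.n, s'.rk c' = dk A s x nt xs := by
  classical
  obtain ⟨hp, hb, hm, -, hn, hS, hv', -⟩ := tr
  change MergeConstraints n' b (tildeRk s xs) (dk A s x nt xs) at hm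
  obtain ⟨hk1, hk2⟩ := green_bd hv hG
  have himg : ∀ r', r' ∈ Finset.Icc 1 (dk A s x nt xs) →
      ∃ j ∈ Set.Icc 1 n', ck s xs b j = r' := by
    intro r' hr'
    obtain ⟨h1, h2⟩ := Finset.mem_Icc.1 hr'
    have : ∃ l ∈ Set.Icc 1 nt, tildeRk s xs l = r' := by
      rcases h2.lt_or_eq with h2 | h2
      · by_contra hcon
        obtain ⟨c2, hc2', hcr⟩ := hv.2.2.1.surjOn (⟨h1, by omega⟩ : r' ∈ Set.Icc 1 s.n)
        have hred : r' ∈ redSet s nt xs := by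
          refine ⟨⟨2 * c2, ⟨by have := hc2'.1; omega, by have := hc2'.2; omega⟩, ?_⟩, hcon⟩
          rw [hatRk_two, hcr]
        have := dk_le (A := A) (x := x) (Or.inr hred)
        omega
      · rw [h2]; exact hG.1
    obtain ⟨l, hl, htl⟩ := this
    obtain ⟨j, hj, hlj⟩ := part_cover hb hl
    exact ⟨j, hj, (ck_eq hb hm hj hlj (by omega)).trans htl⟩
  choose f hf1 hf2 using himg
  have hcard := Finset.card_le_card_of_injOn (s := (Finset.Icc 1 (dk A s x nt xs)).attach)
    (t := Finset.Icc 1 n') (fun i => f i.1 i.2) (fun i _ => by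
      simpa using hf1 i.1 i.2) (by
      intro i _ j _ hij
      simp only at hij
      have h1 := hf2 i.1 i.2
      rw [hij, hf2 j.1 j.2] at h1
      exact Subtype.ext h1.symm)
  simp at hcard
  exact hv'.2.2.1.surjOn ⟨hk1, by omega⟩

/-- The potential does not increase, and decreases on red events. -/
theorem potential (hv : s.Valid) (tr : TransVia A s x s' pr nt xs n' b) {c h : ℕ} {q : Q}
    (hc : c ∈ Set.Icc 1 s.n) (hh : Hat A s x q h) (hle : h ≤ 2 * c) :
    ∃ c' ∈ Set.Icc 1 s'.n, s'.idx q ≤ c' ∧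
      (∃ h2 q2, h2 ≤ 2 * c ∧ Hat A s x q2 h2 ∧ s'.idx q2 = c') ∧
      s'.rk c' ≤ s.rk c ∧
      (∀ k ∈ redSet s nt xs, k ≤ s.rk c → s'.rk c' < s.rk c) := by
  classical
  have hpos := fun q h => hat_pos (q := q) (h := h) tr
  obtain ⟨hp, hb, hm, -, hn, hS, hv', hnorm⟩ := tr
  have hbij := hv'.2.2.1
  rw [hn] at hbij
  have hrc := hv.2.2.1.mapsTo hc
  obtain ⟨hrc1, hrc2⟩ := hrc
  obtain ⟨hc1, hc2⟩ := hc
  obtain ⟨l0, hl0, hxl0, j0, hj0, hlj0, -, e0⟩ := hpos q h hh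
  obtain ⟨l, hl, hx1, hx2⟩ := prune_cover hp (h := 2 * c) hl0 (by omega) (by omega)
  obtain ⟨q2, hq2⟩ := (hp.2.1 l hl).2
  have hh2 : Hat A s x q2 (xs l) := ⟨(hp.2.1 l hl).1, hq2⟩
  obtain ⟨l', hl', hxl', j, hj, hlj, -, e⟩ := hpos q2 _ hh2
  have : l' = l := hp.1.injOn hl' hl hxl'
  subst this
  have hck : ck s xs b j ≤ s.rk c := by
    refine (ck_le hlj).trans ?_
    rw [← hatRk_two]
    exact tilde_le hx1 hx2
  have hinv : ∀ v, v ∈ Finset.Icc 1 (s'.rk j) → ∃ i ∈ Set.Icc 1 n', s'.rk i = v := by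
    intro v hv
    obtain ⟨h1, h2⟩ := Finset.mem_Icc.1 hv
    exact hbij.surjOn ⟨h1, h2.trans (hbij.mapsTo hj).2⟩
  choose f hf1 hf2 using hinv
  have hfle : ∀ v hv, ck s xs b (f v hv) ≤ s.rk c := by
    intro v hv
    by_contra hcon
    have := hnorm j hj (f v hv) (hf1 v hv) (by unfold ck at hcon hck; omega)
    rw [hf2] at this
    have := (Finset.mem_Icc.1 hv).2
    omega
  have hcard : ∀ T : Finset ℕ, (∀ v hv, ck s xs b (f v hv) ∈ T) → s'.rk j ≤ T.card := by
    intro T hT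
    have := Finset.card_le_card_of_injOn (s := (Finset.Icc 1 (s'.rk j)).attach)
      (t := T) (fun i => ck s xs b (f i.1 i.2)) (fun i _ => hT i.1 i.2) (by
        intro u _ v _ huv
        simp only at huv
        obtain ⟨lu, hlu, hu⟩ := ck_spec (s := s) (xs := xs) hb (hf1 u.1 u.2)
        obtain ⟨lv, hlv, hv2⟩ := ck_spec (s := s) (xs := xs) hb (hf1 v.1 v.2)
        have hfl := hfle u.1 u.2
        have := tilde_inj hv hp (part_sub hb (hf1 u.1 u.2) hlu) (part_sub hb (hf1 v.1 v.2) hlv)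
          (by omega) (by omega)
        subst this
        have h1 := part_le hb (hf1 u.1 u.2) (hf1 v.1 v.2) hlu.1 hlv.2 le_rfl
        have h2 := part_le hb (hf1 v.1 v.2) (hf1 u.1 u.2) hlv.1 hlu.2 le_rfl
        have h3 : f u.1 u.2 = f v.1 v.2 := by omega
        apply Subtype.ext
        rw [← hf2 u.1 u.2, ← hf2 v.1 v.2, h3])
    simpa using this
  have hck1 : ∀ i ∈ Set.Icc 1 n', 1 ≤ ck s xs b i := by
    intro i hi
    obtain ⟨li, hli, hi'⟩ := ck_spec (s := s) (xs := xs) hb hi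
    rw [← hi']
    exact (tilde_bd hv hp (part_sub hb hi hli)).1
  refine ⟨j, by rw [hn]; exact hj, ?_, ⟨xs l', q2, hx1, hh2, e⟩, ?_, ?_⟩
  · rw [e0]
    exact part_le hb hj0 hj hlj0.1 hlj.2 (prune_uniq hp hl0 hl (h := 2 * c) (by omega) hx2)
  · have := hcard (Finset.Icc 1 (s.rk c)) (fun v hv =>
      Finset.mem_Icc.2 ⟨hck1 _ (hf1 v hv), hfle v hv⟩)
    simpa using this
  · intro k hk hkle
    have hk1 := (red_bd hv hk).1
    have := hcard ((Finset.Icc 1 (s.rk c)).erase k) (fun v hv => by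
      refine Finset.mem_erase.2 ⟨?_, Finset.mem_Icc.2 ⟨hck1 _ (hf1 v hv), hfle v hv⟩⟩
      intro hEq
      obtain ⟨li, hli, hi'⟩ := ck_spec (s := s) (xs := xs) hb (hf1 v hv)
      exact hk.2 ⟨li, part_sub hb (hf1 v hv) hli, hi'.trans hEq⟩)
    rw [Finset.card_erase_of_mem (Finset.mem_Icc.2 ⟨hk1, hkle⟩)] at this
    simp at this
    omega

end merge

theorem pigeon {X : Type*} [Finite X] (P : ℕ → X → Prop) (h : ∀ N, ∃ i, N ≤ i ∧ ∃ q, P i q) :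
    ∃ q, ∀ N, ∃ i, N ≤ i ∧ P i q := by
  have := Fintype.ofFinite X
  by_contra hcon
  push Not at hcon
  choose M hM using hcon
  obtain ⟨i, hi, q, hq⟩ := h (Finset.univ.sup M)
  exact hM q i ((Finset.le_sup (Finset.mem_univ q)).trans hi) hq

theorem eventually_bound (K : ℕ) (P : ℕ → ℕ → Prop)
    (h : ∀ r, r < K → ∃ N, ∀ i, N ≤ i → P r i) : ∃ N, ∀ r, r < K → ∀ i, N ≤ i → P r i := by
  have h' : ∀ r, ∃ N, r < K → ∀ i, N ≤ i → P r i := by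
    intro r
    by_cases hr : r < K
    · obtain ⟨N, hN⟩ := h r hr
      exact ⟨N, fun _ => hN⟩
    · exact ⟨0, fun h => absurd h hr⟩
  choose M hM using h'
  refine ⟨(Finset.range K).sup M, fun r hr i hi => hM r hr i ?_⟩
  exact (Finset.le_sup (Finset.mem_range.2 hr)).trans hi

section run

variable [Fintype Q] {A : NBA Q Alp} {w : ℕ → Alp} {s : ℕ → Slice Q} {pr nt n' : ℕ → ℕ}
  {xs b : ℕ → ℕ → ℕ}

/-- Canonical edges. -/
def Edge (A : NBA Q Alp) (w : ℕ → Alp) (s : ℕ → Slice Q) (i : ℕ) (q q' : Q) : Prop :=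
  In (s i) q ∧ q' ∈ A.delta q (w i) ∧ ∃ h, Hat A (s i) (w i) q' h ∧
    ((h = 2 * (s i).idx q - 1 ∧ q' ∈ A.F) ∨ (h = 2 * (s i).idx q ∧ q' ∉ A.F))

theorem edge_pred (hv : ∀ i, (s i).Valid)
    (tr : ∀ i, TransVia A (s i) (w i) (s (i + 1)) (pr i) (nt i) (xs i) (n' i) (b i))
    {i : ℕ} {q' : Q} (hq : In (s (i + 1)) q') : ∃ q, Edge A w s i q q' := by
  obtain ⟨h, hh⟩ := in_hat (tr i) hq
  obtain ⟨a, ha, q, hqa, hd, hor⟩ := delta_of_hat hh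
  refine ⟨q, ⟨a, ha, hqa⟩, hd, h, hh, ?_⟩
  rw [idx_eq (hv i) ha hqa]
  exact hor

theorem history (hv : ∀ i, (s i).Valid)
    (tr : ∀ i, TransVia A (s i) (w i) (s (i + 1)) (pr i) (nt i) (xs i) (n' i) (b i))
    (i : ℕ) : ∀ q, In (s i) q → ∃ y : ℕ → Q, y i = q ∧ ∀ t, t < i → Edge A w s t (y t) (y (t + 1)) := by
  induction i with
  | zero => exact fun q _ => ⟨fun _ => q, rfl, fun t ht => absurd ht (by omega)⟩
  | succ i ih =>
    intro q hq
    obtain ⟨q0, hE⟩ := edge_pred hv tr hq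
    obtain ⟨y, hy, hyE⟩ := ih q0 hE.1
    refine ⟨fun t => if t ≤ i then y t else q, by simp, fun t ht => ?_⟩
    rcases Nat.lt_or_ge t i with h | h
    · simp only [if_pos h.le, if_pos (show t + 1 ≤ i from h)]
      exact hyE t h
    · obtain rfl : t = i := by omega
      simp only [le_refl, if_true, if_neg (show ¬ t + 1 ≤ t by omega), hy]
      exact hE

theorem sound (hv : ∀ i, (s i).Valid)
    (tr : ∀ i, TransVia A (s i) (w i) (s (i + 1)) (pr i) (nt i) (xs i) (n' i) (b i))
    (h0 : ∀ q, In (s 0) q → q ∈ A.Q0) (K N : ℕ)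
    (hK : ∀ i, N ≤ i → K ≤ dk A (s i) (w i) (nt i) (xs i))
    (hR : ∀ i, N ≤ i → K ∉ redSet (s i) (nt i) (xs i))
    (hG : ∀ M, ∃ i, M ≤ i ∧ dk A (s i) (w i) (nt i) (xs i) = K ∧
      K ∈ greenSet A (s i) (w i) (nt i) (xs i)) : A.Accepts w := by
  -- the rank K is eventually always present
  obtain ⟨i0, hi0, hd0, hG0⟩ := hG N
  have hpres : ∀ i, i0 + 1 ≤ i → ∃ c ∈ Set.Icc 1 (s i).n, (s i).rk c = K := by
    intro i hi
    induction i, hi using Nat.le_induction with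
    | base =>
      have := birth (hv i0) (tr i0) (by rw [hd0]; exact hG0)
      rwa [hd0] at this
    | succ i hi ih =>
      obtain ⟨c, hc, hcK⟩ := ih
      obtain ⟨c', hc', hr, -⟩ := step_rank (hv i) (tr i) hc (by rw [hcK]; exact hK i (by omega))
        (by rw [hcK]; exact hR i (by omega))
      exact ⟨c', hc', hr.trans hcK⟩
  have hpres' : ∀ i, ∃ c, i0 + 1 ≤ i → c ∈ Set.Icc 1 (s i).n ∧ (s i).rk c = K := by
    intro i
    by_cases hi : i0 + 1 ≤ i
    · obtain ⟨c, h⟩ := hpres i hi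
      exact ⟨c, fun _ => h⟩
    · exact ⟨0, fun h => absurd h hi⟩
  choose p hp using hpres'
  have hbar : ∀ i, i0 + 1 ≤ i → ∀ q h, Hat A (s i) (w i) q h → 2 * p i < h →
      p (i + 1) < (s (i + 1)).idx q := by
    intro i hi q h hh hlt
    obtain ⟨hc, hcK⟩ := hp i hi
    obtain ⟨c', hc', hr, hgt, -⟩ := step_rank (hv i) (tr i) hc (by rw [hcK]; exact hK i (by omega))
        (by rw [hcK]; exact hR i (by omega))
    obtain ⟨hc2, hc2K⟩ := hp (i + 1) (by omega)
    have := (hv (i + 1)).2.2.1.injOn hc2 hc' (by omega)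
    rw [this]
    exact hgt q h hh hlt
  let Good : ℕ → Prop := fun i => i0 + 1 ≤ i ∧ K ∈ greenSet A (s i) (w i) (nt i) (xs i)
  have hGood : ∀ M, ∃ i, M ≤ i ∧ Good i := by
    intro M
    obtain ⟨i, hi, -, hg⟩ := hG (M + i0 + 1)
    exact ⟨i, by omega, by omega, hg⟩
  let D : ℕ → Q → Prop := fun M q => ∀ T, ∃ i, T ≤ i ∧ (M ≤ i ∧ Good i ∧ ∃ y : ℕ → Q, y M = q ∧
    (In (s i) (y i) ∧ (s i).idx (y i) = p i) ∧
    ∀ t, M ≤ t → t < i → Edge A w s t (y t) (y (t + 1)))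
  have hD0 : ∃ q, D 0 q := by
    apply pigeon
    intro T
    obtain ⟨i, hi, hg⟩ := hGood T
    obtain ⟨hc, hcK⟩ := hp i hg.1
    obtain ⟨q, hq⟩ := (hv i).1 _ hc
    obtain ⟨y, hy, hE⟩ := history hv tr i q ⟨_, hc, hq⟩
    refine ⟨i, hi, y 0, Nat.zero_le _, hg, y, rfl, ?_, fun t _ ht => hE t ht⟩
    rw [hy]
    exact ⟨⟨_, hc, hq⟩, idx_eq (hv i) hc hq⟩
  have hDs : ∀ M q, D M q → ∃ q', Edge A w s M q q' ∧ D (M + 1) q' := by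
    intro M q hD
    have := pigeon (fun i q' => M + 1 ≤ i ∧ Good i ∧ ∃ y : ℕ → Q, y M = q ∧ y (M + 1) = q' ∧
      (In (s i) (y i) ∧ (s i).idx (y i) = p i) ∧
      ∀ t, M ≤ t → t < i → Edge A w s t (y t) (y (t + 1))) (by
        intro T
        obtain ⟨i, hi, -, hg, y, hy, hin, hE⟩ := hD (T + M + 1)
        exact ⟨i, by omega, y (M + 1), by omega, hg, y, hy, rfl, hin, hE⟩)
    obtain ⟨q', hq'⟩ := this
    refine ⟨q', ?_, ?_⟩
    · obtain ⟨i, hi, hMi, hg, y, hy, hy', hin, hE⟩ := hq' 0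
      have := hE M le_rfl hMi
      rwa [hy, hy'] at this
    · intro T
      obtain ⟨i, hi, hMi, hg, y, hy, hy', hin, hE⟩ := hq' T
      exact ⟨i, hi, hMi, hg, y, hy', hin, fun t ht => hE t (by omega)⟩
  obtain ⟨q0, hq0⟩ := hD0
  choose nxt hnE hnD using hDs
  let f : ∀ M, {q // D M q} := fun M => Nat.rec (motive := fun M => {q // D M q}) ⟨q0, hq0⟩
    (fun M q => ⟨nxt M q.1 q.2, hnD M q.1 q.2⟩) M
  let ρ : ℕ → Q := fun M => (f M).1
  have hρD : ∀ M, D M (ρ M) := fun M => (f M).2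
  have hρE : ∀ M, Edge A w s M (ρ M) (ρ (M + 1)) := fun M => hnE M (f M).1 (f M).2
  clear_value ρ
  refine ⟨ρ, ⟨h0 _ (hρE 0).1, fun i => (hρE i).2.1⟩, ?_⟩
  by_contra hcon
  push Not at hcon
  obtain ⟨M1, hM1⟩ := hcon
  -- positions of the path are at most `p`
  have hle : ∀ M, i0 + 1 ≤ M → (s M).idx (ρ M) ≤ p M := by
    intro M hM
    by_contra hgt
    obtain ⟨i, -, hMi, hg, y, hy, ⟨hin, hidx⟩, hE⟩ := hρD M 0
    have : ∀ t, M ≤ t → t ≤ i → p t < (s t).idx (y t) := by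
      intro t ht
      induction t, ht using Nat.le_induction with
      | base => intro _; rw [hy]; omega
      | succ t ht ih =>
        intro hti
        have h1 := ih (by omega)
        obtain ⟨-, -, h, hh, hor⟩ := hE t ht (by omega)
        exact hbar t (by omega) _ h hh (by omega)
    have := this i hMi le_rfl
    omega
  obtain ⟨i, hi, hMi, hg, y, hy, ⟨hin, hidx⟩, hE⟩ := hρD (M1 + i0 + 1) 0
  have hmon : ∀ t, M1 + i0 + 1 ≤ t → t ≤ i → (s t).idx (y t) ≤ (s t).idx (ρ t) := by
    intro t ht
    induction t, ht using Nat.le_induction with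
    | base => intro _; rw [hy]
    | succ t ht ih =>
      intro hti
      have h1 := ih (by omega)
      obtain ⟨-, -, h, hh, hor⟩ := hE t ht (by omega)
      obtain ⟨-, -, h', hh', hor'⟩ := hρE t
      have hnF := hM1 (t + 1) (by omega)
      exact hat_mono (tr t) hh hh' (by grind)
  have h1 := hmon i hMi le_rfl
  have h2 := hle i hg.1
  have h3 : (s i).idx (ρ i) = p i := by omega
  obtain ⟨-, -, h, hh, hor⟩ := hρE i
  have hnF := hM1 (i + 1) (by omega)
  obtain ⟨rfl, hFF⟩ | ⟨rfl, -⟩ := hor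
  · exact hnF hFF
  · obtain ⟨hc, hcK⟩ := hp i hg.1
    have := green_empty (hv i) hc hcK hg.2
    rw [h3] at hh
    have h4 := hh.2
    rw [this] at h4
    exact h4

theorem complete (hv : ∀ i, (s i).Valid)
    (tr : ∀ i, TransVia A (s i) (w i) (s (i + 1)) (pr i) (nt i) (xs i) (n' i) (b i))
    (h0 : ∀ q, q ∈ A.Q0 → In (s 0) q) (hA : A.Accepts w) (K N : ℕ)
    (hK : ∀ i, N ≤ i → K ≤ dk A (s i) (w i) (nt i) (xs i))
    (hR : ∀ M, ∃ i, M ≤ i ∧ dk A (s i) (w i) (nt i) (xs i) = K ∧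
      K ∉ greenSet A (s i) (w i) (nt i) (xs i)) : False := by
  obtain ⟨ρ, ⟨hρ0, hρ⟩, hF⟩ := hA
  have hin : ∀ i, In (s i) (ρ i) := by
    intro i
    induction i with
    | zero => exact h0 _ hρ0
    | succ i ih =>
      obtain ⟨ha, hq⟩ := ih.idx_mem (hv i)
      obtain ⟨h, hh, -⟩ := hat_of_delta (hv i) ha hq (hρ i)
      exact hat_in (tr i) hh
  obtain ⟨a, ha⟩ : ∃ a : ℕ → ℕ, ∀ i, (s i).idx (ρ i) = a i := ⟨_, fun _ => rfl⟩
  have haI : ∀ i, a i ∈ Set.Icc 1 (s i).n := fun i => by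
    rw [← ha]; exact ((hin i).idx_mem (hv i)).1
  have hstep : ∀ i, ∃ h, Hat A (s i) (w i) (ρ (i + 1)) h ∧ h ≤ 2 * a i ∧
      (ρ (i + 1) ∈ A.F → h < 2 * a i) := by
    intro i
    have := ((hin i).idx_mem (hv i)).2
    rw [ha] at this
    exact hat_of_delta (hv i) (haI i) this (hρ i)
  have hinj : ∀ i c c', c ∈ Set.Icc 1 (s i).n → c' ∈ Set.Icc 1 (s i).n →
      (s i).rk c = (s i).rk c' → c = c' := fun i c c' h1 h2 h3 => (hv i).2.2.1.injOn h1 h2 h3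
  have hbar : ∀ i, N ≤ i → ∀ c ∈ Set.Icc 1 (s i).n, (s i).rk c < K →
      ∃ c' ∈ Set.Icc 1 (s (i + 1)).n, (s (i + 1)).rk c' = (s i).rk c ∧
      (∀ q h, Hat A (s i) (w i) q h → h ≤ 2 * c → (s (i + 1)).idx q ≤ c') ∧
      (∀ q h, Hat A (s i) (w i) q h → h < 2 * c → (s (i + 1)).idx q < c') := by
    intro i hi c hc hr
    have hk := hK i hi
    obtain ⟨c', hc', h1, -, h2, h3⟩ := step_rank (hv i) (tr i) hc (by omega) (by
      intro hred
      have := dk_le (A := A) (x := w i) (Or.inr hred)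
      omega)
    exact ⟨c', hc', h1, h2, h3 (by omega)⟩
  let Le : ℕ → ℕ → Prop := fun r i => ∃ c ∈ Set.Icc 1 (s i).n, (s i).rk c = r ∧ a i ≤ c
  let Lt : ℕ → ℕ → Prop := fun r i => ∃ c ∈ Set.Icc 1 (s i).n, (s i).rk c = r ∧ a i < c
  have hLe : ∀ r, r < K → ∀ i, N ≤ i → Le r i → Le r (i + 1) := by
    rintro r hr i hi ⟨c, hc, rfl, hle⟩
    obtain ⟨c', hc', h1, h2, h3⟩ := hbar i hi c hc hr
    obtain ⟨h, hh, hhle, -⟩ := hstep i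
    exact ⟨c', hc', h1, by rw [← ha]; exact h2 _ h hh (by omega)⟩
  have hLt : ∀ r, r < K → ∀ i, N ≤ i → Lt r i → Lt r (i + 1) := by
    rintro r hr i hi ⟨c, hc, rfl, hle⟩
    obtain ⟨c', hc', h1, h2, h3⟩ := hbar i hi c hc hr
    obtain ⟨h, hh, hhle, -⟩ := hstep i
    exact ⟨c', hc', h1, by rw [← ha]; exact h3 _ h hh (by omega)⟩
  have hLeF : ∀ r, r < K → ∀ i, N ≤ i → ρ (i + 1) ∈ A.F → Le r i → Lt r (i + 1) := by
    rintro r hr i hi hFi ⟨c, hc, rfl, hle⟩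
    obtain ⟨c', hc', h1, h2, h3⟩ := hbar i hi c hc hr
    obtain ⟨h, hh, hhle, hhF⟩ := hstep i
    have := hhF hFi
    exact ⟨c', hc', h1, by rw [← ha]; exact h3 _ h hh (by omega)⟩
  have hstab : ∀ r, r < K → ∃ M, ∀ i, M ≤ i → (Le r i → Lt r i) ∧ (Le r (i + 1) → Le r i) := by
    intro r hr
    by_cases hex : ∃ i, N ≤ i ∧ Le r i
    · obtain ⟨i1, hi1, hle1⟩ := hex
      have hall : ∀ i, i1 ≤ i → Le r i := by
        intro i hi
        induction i, hi using Nat.le_induction with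
        | base => exact hle1
        | succ i hi ih => exact hLe r hr i (by omega) ih
      obtain ⟨i2, hi2, hF2⟩ := hF (i1 + 1)
      obtain ⟨i2, rfl⟩ : ∃ j, i2 = j + 1 := ⟨i2 - 1, by omega⟩
      refine ⟨i2 + 1, fun i hi => ⟨fun _ => ?_, fun _ => hall i (by omega)⟩⟩
      induction i, hi using Nat.le_induction with
      | base => exact hLeF r hr i2 (by omega) hF2 (hall i2 (by omega))
      | succ i hi ih => exact hLt r hr i (by omega) (ih (hall i (by omega)))
    · push Not at hex
      exact ⟨N, fun i hi => ⟨fun h => absurd h (hex i hi),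
        fun h => absurd h (hex (i + 1) (by omega))⟩⟩
  obtain ⟨N2, hN2⟩ := eventually_bound K (fun r i => (Le r i → Lt r i) ∧ (Le r (i + 1) → Le r i)) hstab
  have hrka : ∀ i, N2 ≤ i → K ≤ (s i).rk (a i) := by
    intro i hi
    by_contra hlt
    obtain ⟨c, hc, h1, h2⟩ := (hN2 _ (by omega : (s i).rk (a i) < K) i hi).1
      ⟨a i, haI i, rfl, le_rfl⟩
    have := hinj i _ _ hc (haI i) h1
    omega
  have hKcard : K ≤ Fintype.card Q := by
    have h1 := hrka N2 le_rfl
    have h2 := ((hv N2).2.2.1.mapsTo (haI N2)).2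
    have h3 := n_le_card (hv N2)
    omega
  have hred : ∀ M, ∃ i, M ≤ i ∧ K ∈ redSet (s i) (nt i) (xs i) := by
    intro M
    obtain ⟨i, hi, hd, hnG⟩ := hR M
    refine ⟨i, hi, ?_⟩
    have := dk_cases (A := A) (s := s i) (x := w i) (nt := nt i) (xs := xs i)
    rw [hd] at this
    rcases this with h | h | h
    · exact absurd h hnG
    · exact h
    · omega
  obtain ⟨N3, hN3, hred3⟩ := hred (N + N2)
  have hpres : ∀ i, N3 ≤ i → ∀ r, 1 ≤ r → r < K → ∃ c ∈ Set.Icc 1 (s i).n, (s i).rk c = r := by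
    intro i hi
    induction i, hi using Nat.le_induction with
    | base =>
      intro r h1 h2
      have := (red_bd (hv N3) hred3).2
      exact (hv N3).2.2.1.surjOn ⟨h1, by omega⟩
    | succ i hi ih =>
      intro r h1 h2
      obtain ⟨c, hc, rfl⟩ := ih r h1 h2
      obtain ⟨c', hc', h, -⟩ := hbar i (by omega) c hc h2
      exact ⟨c', hc', h⟩
  let W : ℕ → ℕ → Prop := fun i u => ∃ c ∈ Set.Icc 1 (s i).n, a i ≤ c ∧ (s i).rk c = u ∧
    ∀ e, a i ≤ e → e ≤ c → K ≤ (s i).rk e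
  have hWstep : ∀ i, N3 ≤ i → ∀ u, W i u → ∃ u', W (i + 1) u' ∧ u' ≤ u ∧
      (K ∈ redSet (s i) (nt i) (xs i) → u' < u) := by
    rintro i hi u ⟨c, hc, hac, rfl, hall⟩
    obtain ⟨h, hh, hhle, -⟩ := hstep i
    obtain ⟨c', hc', hidx, ⟨h2, q2, hh2le, hh2, hidx2⟩, hle, hlt⟩ :=
      potential (hv i) (tr i) hc hh (by omega)
    refine ⟨_, ⟨c', hc', by rw [← ha]; exact hidx, rfl, ?_⟩, hle,
      fun hr => hlt K hr (hall c hac le_rfl)⟩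
    intro e' he1 he2
    by_contra hcon
    have he'I : e' ∈ Set.Icc 1 (s (i + 1)).n :=
      ⟨(haI (i + 1)).1.trans he1, he2.trans hc'.2⟩
    have hr1 : 1 ≤ (s (i + 1)).rk e' := ((hv (i + 1)).2.2.1.mapsTo he'I).1
    obtain ⟨e, heI, her⟩ := hpres i hi _ hr1 (by omega)
    obtain ⟨e2, he2I, he2r, hb1, hb2⟩ := hbar i (by omega) e heI (by omega)
    have : e2 = e' := hinj (i + 1) _ _ he2I he'I (by omega)
    subst this
    -- `a i ≤ e`
    by_cases hae : a i ≤ e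
    · by_cases hec : e ≤ c
      · have := hall e hae hec
        omega
      · have := hb2 q2 h2 hh2 (by omega)
        omega
    · obtain ⟨e3, he3I, he3r, hae3⟩ := (hN2 _ (by omega : (s (i + 1)).rk e2 < K) i (by omega)).2
        ⟨e2, he'I, rfl, he1⟩
      have := hinj i _ _ he3I heI (by omega)
      omega
  have hfin : ∀ u i, N3 ≤ i → W i u → False := by
    intro u
    induction u using Nat.strong_induction_on with
    | _ u ih =>
      intro i hi hW
      obtain ⟨i2, hi2, hr2⟩ := hred i
      have : ∃ u', u' ≤ u ∧ W i2 u' := by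
        clear hr2
        induction i2, hi2 using Nat.le_induction with
        | base => exact ⟨u, le_rfl, hW⟩
        | succ j hj ihj =>
          obtain ⟨u', hu', hW'⟩ := ihj
          obtain ⟨u2, hW2, hle, -⟩ := hWstep j (by omega) u' hW'
          exact ⟨u2, by omega, hW2⟩
      obtain ⟨u', hu', hW'⟩ := this
      obtain ⟨u2, hW2, -, hlt⟩ := hWstep i2 (by omega) u' hW'
      have := hlt hr2
      exact ih u2 (by omega) (i2 + 1) (by omega) hW2
  refine hfin _ N3 le_rfl ⟨a N3, haI N3, le_rfl, rfl, ?_⟩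
  intro e h1 h2
  have : e = a N3 := by omega
  subst this
  exact hrka N3 (by omega)

end run

theorem run_reachable {P : Type*} (B : TDPA P Alp) (w : ℕ → Alp) (i : ℕ) :
    B.Reachable (B.run w i) := by
  induction i with
  | zero => exact ⟨[], rfl⟩
  | succ i ih =>
    obtain ⟨l, hl⟩ := ih
    exact ⟨l ++ [w i], by rw [List.foldl_append, hl]; rfl⟩

theorem main [Fintype Q] (A : NBA Q Alp)
    (hQ0 : A.Q0.Nonempty) (B : TDPA (Slice Q) Alp) (hB : ObtainedUnified A B) (w : ℕ → Alp) :
    B.Accepts w ↔ A.Accepts w := by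
  obtain ⟨hn, hS, hrk, hstep⟩ := hB
  have htr := fun i => hstep _ (run_reachable B w i) (w i)
  choose nt xs n' b tr using htr
  obtain ⟨s, hs⟩ : ∃ s : ℕ → Slice Q, s = B.run w := ⟨_, rfl⟩
  obtain ⟨pr, hpr⟩ : ∃ pr : ℕ → ℕ, ∀ i, B.c (B.run w i) (w i) = pr i := ⟨_, fun _ => rfl⟩
  replace tr : ∀ i, TransVia A (s i) (w i) (s (i + 1)) (pr i) (nt i) (xs i) (n' i) (b i) := by
    intro i
    rw [hs, ← hpr]
    exact tr i
  have hs0 : s 0 = B.p0 := by rw [hs]; rfl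
  have hv : ∀ i, (s i).Valid := by
    intro i
    cases i with
    | succ i => exact (tr i).2.2.2.2.2.2.1
    | zero =>
      rw [hs0]
      refine ⟨?_, ?_, ?_, ?_⟩
      · rintro i ⟨h1, h2⟩
        obtain rfl : i = 1 := by omega
        rw [hS]; exact hQ0
      · rintro i ⟨h1, h2⟩ j ⟨h3, h4⟩ hne
        omega
      · rw [hn]
        simp [hrk]
      · intro _
        rw [hn, hrk]
  have h0 : ∀ q, In (s 0) q ↔ q ∈ A.Q0 := by
    intro q
    rw [hs0]
    constructor
    · rintro ⟨a, ⟨h1, h2⟩, hq⟩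
      obtain rfl : a = 1 := by omega
      rwa [hS] at hq
    · intro hq
      exact ⟨1, ⟨le_rfl, by omega⟩, by rwa [hS]⟩
  have hprio : ∀ i, 1 ≤ dk A (s i) (w i) (nt i) (xs i) ∧
      dk A (s i) (w i) (nt i) (xs i) ≤ Fintype.card Q + 1 ∧
      ((dk A (s i) (w i) (nt i) (xs i) ∈ greenSet A (s i) (w i) (nt i) (xs i) ∧
        pr i = 2 * dk A (s i) (w i) (nt i) (xs i)) ∨
      (dk A (s i) (w i) (nt i) (xs i) ∉ greenSet A (s i) (w i) (nt i) (xs i) ∧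
        pr i = 2 * dk A (s i) (w i) (nt i) (xs i) - 1)) := by
    intro i
    have := dk_bd (A := A) (x := w i) (nt := nt i) (xs := xs i) (hv i)
    exact ⟨this.1, this.2, (tr i).2.2.2.1⟩
  have hev : ∀ m, (∀ m', (∀ N, ∃ i, N ≤ i ∧ pr i = m') → m ≤ m') →
      ∃ N, ∀ i, N ≤ i → m ≤ pr i := by
    intro m hm
    obtain ⟨N, hN⟩ := eventually_bound m (fun r i => pr i ≠ r) (by
      intro r hr
      by_contra hcon
      push Not at hcon
      have := hm r hcon
      omega)
    refine ⟨N, fun i hi => ?_⟩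
    by_contra hlt
    exact hN (pr i) (by omega) i hi rfl
  simp only [TDPA.Accepts, hpr]
  constructor
  · rintro ⟨m, hinf, hmin, hm⟩
    obtain ⟨N, hN⟩ := hev m hmin
    obtain ⟨K, rfl⟩ := hm
    refine sound hv tr (fun q => (h0 q).1) K N ?_ ?_ ?_
    · intro i hi
      have := hN i hi
      obtain ⟨h1, h2, ⟨h3, h4⟩ | ⟨h3, h4⟩⟩ := hprio i <;> omega
    · intro i hi hred
      have := hN i hi
      have hle := dk_le (A := A) (x := w i) (Or.inr hred)
      obtain ⟨h1, h2, ⟨h3, h4⟩ | ⟨h3, h4⟩⟩ := hprio i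
      · have : dk A (s i) (w i) (nt i) (xs i) = K := by omega
        rw [this] at h3
        exact hred.2 h3.1
      · omega
    · intro M
      obtain ⟨i, hi, hpi⟩ := hinf M
      refine ⟨i, hi, ?_⟩
      obtain ⟨h1, h2, ⟨h3, h4⟩ | ⟨h3, h4⟩⟩ := hprio i
      · have : dk A (s i) (w i) (nt i) (xs i) = K := by omega
        rw [this] at h3
        exact ⟨this, h3⟩
      · omega
  · intro hA
    classical
    have hex : ∃ m, ∀ N, ∃ i, N ≤ i ∧ pr i = m := by
      obtain ⟨q, hq⟩ := pigeon (X := Fin (2 * Fintype.card Q + 3)) (fun i q => pr i = q.1) (by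
        intro N
        refine ⟨N, le_rfl, ⟨pr N, ?_⟩, rfl⟩
        obtain ⟨h1, h2, ⟨h3, h4⟩ | ⟨h3, h4⟩⟩ := hprio N <;> omega)
      exact ⟨q.1, hq⟩
    refine ⟨Nat.find hex, Nat.find_spec hex, fun m' h => Nat.find_min' hex h, ?_⟩
    by_contra hodd
    obtain ⟨N, hN⟩ := hev (Nat.find hex) (fun m' h => Nat.find_min' hex h)
    have hinf := Nat.find_spec hex
    generalize Nat.find hex = m at *
    rw [Nat.not_even_iff_odd] at hodd
    obtain ⟨K, rfl⟩ := hodd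
    refine complete hv tr (fun q => (h0 q).2) hA (K + 1) N ?_ ?_
    · intro i hi
      have := hN i hi
      obtain ⟨h1, h2, ⟨h3, h4⟩ | ⟨h3, h4⟩⟩ := hprio i <;> omega
    · intro M
      obtain ⟨i, hi, hpi⟩ := hinf M
      refine ⟨i, hi, ?_⟩
      obtain ⟨h1, h2, ⟨h3, h4⟩ | ⟨h3, h4⟩⟩ := hprio i
      · omega
      · have : dk A (s i) (w i) (nt i) (xs i) = K + 1 := by omega
        rw [this] at h3
        exact ⟨this, h3⟩

end UC

/-- For an NBA `A` with nonempty initial set, any TDPA `B` obtained by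
the unified construction (with arbitrary choices of valid merge partitions in each
transition) recognizes the same language: `L(B) = L(A)`. -/
theorem unified_correct {Q Alp : Type} [Fintype Q] (A : NBA Q Alp)
    (hQ0 : A.Q0.Nonempty) (B : TDPA (Slice Q) Alp) (hB : ObtainedUnified A B) :
    {w : ℕ → Alp | B.Accepts w} = {w : ℕ → Alp | A.Accepts w} := by
  ext w
  exact UC.main A hQ0 B hB w
end

section
/- Let A = (Q, Σ, Δ, Q₀, F) be an NBA with Q₀ ≠ ∅, let B be a TDPA obtained from the unified construction for A, let w : ℕ → Σ, let (αᵢ, tᵢ) be the states of the run of B on w, and let kᵢ be the dominating rank of the transition taken at time i. Then: (a) Q_{t_{i+1}} = Δ(Q_{tᵢ}, w(i)) for all i; and (b) for every run q of A on w, q(i) ∈ Q_{tᵢ} for all i, and the rank-profiles satisfy rp_{(α_{i+1}, t_{i+1})}(q(i+1)) ≼_{kᵢ} rp_{(αᵢ, tᵢ)}(q(i)) for all i. -/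
/-! Core definitions: NBA, TDPA, ranked slices, and the unified
determinization construction. -/

universe u v

variable {Q : Type u} {Alp : Type v}

/-- The parent function `↑` of the rank tree of a ranked slice with `n` sets and
ranking `α`. -/
noncomputable def up (n : ℕ) (α : ℕ → ℕ) (i : ℕ) : ℕ :=
  sInf {k | i < k ∧ k ≤ n ∧ α k < α i}

/-- The rank-profile of index `i`: the ranks along the path of the rank tree from the
root down to `i`. -/
noncomputable def rpIdx (n : ℕ) (α : ℕ → ℕ) (i : ℕ) : List ℕ :=
  ((((List.range (n + 1)).map (fun m => (up n α)^[m] i)).takeWhile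
      (fun j => decide (1 ≤ j ∧ j ≤ n))).map α).reverse

/-- The rank-profile of a state `q` of a slice. -/
noncomputable def Slice.rp (s : Slice Q) (q : Q) : List ℕ :=
  rpIdx s.n s.rk (s.idx q)

/-- The "better than" order `≺` on rank profiles: compare the common-length prefixes
lexicographically; if they agree, the longer profile is the better (smaller) one. -/
def lexPrec (a b : List ℕ) : Prop :=
  List.Lex (· < ·) (a.take (min a.length b.length)) (b.take (min a.length b.length)) ∨
  (a.take (min a.length b.length) = b.take (min a.length b.length) ∧
    b.length < a.length)

/-- The `k`-cut of a rank profile: the prefix `a₁…a_i` with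
`i = min({length a} ∪ {j | a_j ≥ k})` (1-based). -/
noncomputable def cutk (k : ℕ) (a : List ℕ) : List ℕ :=
  a.take (sInf ({a.length} ∪ {j | 1 ≤ j ∧ j ≤ a.length ∧ k ≤ a.getD (j - 1) 0} : Set ℕ))

/-- `a ≼ₖ b`: comparison of the `k`-cuts. -/
noncomputable def precEqK (k : ℕ) (a b : List ℕ) : Prop :=
  lexPrec (cutk k a) (cutk k b) ∨ cutk k a = cutk k b

section Helpers

/-- Recursive form of `≼ₖ`. -/
def leK (k : ℕ) : List ℕ → List ℕ → Prop
  | _, [] => True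
  | [], _ :: _ => False
  | a :: as, b :: bs => a < b ∨ (a = b ∧ (k ≤ a ∨ leK k as bs))

theorem cutk_nil (k : ℕ) : cutk k [] = [] := by simp [cutk]

theorem cutk_cons (k a : ℕ) (l : List ℕ) :
    cutk k (a :: l) = if k ≤ a then [a] else a :: cutk k l := by
  unfold cutk
  split_ifs with h
  · have : sInf ({(a :: l).length} ∪
        {j | 1 ≤ j ∧ j ≤ (a :: l).length ∧ k ≤ (a :: l).getD (j - 1) 0} : Set ℕ) = 1 := by
      apply le_antisymm
      · apply Nat.sInf_le
        right
        simp [h]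
      · refine le_csInf (Set.Nonempty.inl (Set.singleton_nonempty _)) ?_
        rintro b (hb | hb)
        · simp at hb; omega
        · exact hb.1
    rw [this]; simp
  · set T : Set ℕ := ({l.length} ∪
        {j | 1 ≤ j ∧ j ≤ l.length ∧ k ≤ l.getD (j - 1) 0} : Set ℕ) with hT
    have : sInf ({(a :: l).length} ∪
        {j | 1 ≤ j ∧ j ≤ (a :: l).length ∧ k ≤ (a :: l).getD (j - 1) 0} : Set ℕ)
          = sInf T + 1 := by
      have hTn : T.Nonempty := ⟨_, Or.inl rfl⟩
      apply le_antisymm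
      · apply Nat.sInf_le
        rcases Nat.sInf_mem hTn with h1 | h1
        · left
          simp at h1 ⊢; exact h1
        · right
          obtain ⟨h1, h2, h3⟩ := h1
          refine ⟨by omega, by simpa using h2, ?_⟩
          obtain ⟨c, hc⟩ : ∃ c, sInf T = c + 1 := ⟨sInf T - 1, by omega⟩
          rw [hc] at h3 ⊢
          simpa using h3
      · refine le_csInf (Set.Nonempty.inl (Set.singleton_nonempty _)) ?_
        rintro b (hb | ⟨h1, h2, h3⟩)
        · have : sInf T ≤ l.length := Nat.sInf_le (Or.inl rfl)
          simp at hb; omega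
        · obtain ⟨c, rfl⟩ : ∃ c, b = c + 1 := ⟨b - 1, by omega⟩
          rcases c with _ | c
          · simp at h3; omega
          · have : sInf T ≤ c + 1 := by
              apply Nat.sInf_le
              right
              refine ⟨by omega, by simpa using h2, ?_⟩
              simpa using h3
            omega
    rw [this]; simp

theorem precEq_cons (a : ℕ) (x y : List ℕ) (h : lexPrec x y ∨ x = y) :
    lexPrec (a :: x) (a :: y) ∨ a :: x = a :: y := by
  rcases h with (h | ⟨h1, h2⟩) | h
  · left; left
    have : min (a :: x).length (a :: y).length = min x.length y.length + 1 := by simp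
    rw [this]
    simp only [List.take_succ_cons]
    exact List.Lex.cons h
  · left; right
    have : min (a :: x).length (a :: y).length = min x.length y.length + 1 := by simp
    rw [this]
    simp only [List.take_succ_cons]
    exact ⟨by rw [h1], by simpa using h2⟩
  · right; rw [h]

theorem lexPrec_lt (a b : ℕ) (x y : List ℕ) (h : a < b) : lexPrec (a :: x) (b :: y) := by
  left
  have : min (a :: x).length (b :: y).length = min x.length y.length + 1 := by simp
  rw [this]
  simp only [List.take_succ_cons]
  exact List.Lex.rel h

theorem precEqK_of_leK (k : ℕ) : ∀ a b : List ℕ, leK k a b → precEqK k a b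
  | a, [], _ => by
    unfold precEqK
    rw [cutk_nil]
    rcases h : cutk k a with _ | ⟨c, cs⟩
    · right; rfl
    · left; right; simp
  | [], _ :: _, h => h.elim
  | a :: as, b :: bs, h => by
    unfold precEqK
    rw [cutk_cons, cutk_cons]
    rcases h with h | ⟨rfl, h⟩
    · left
      split_ifs <;> exact lexPrec_lt _ _ _ _ h
    · split_ifs with hk
      · right; rfl
      · rcases h with h | h
        · exact absurd h hk
        · exact precEq_cons _ _ _ (precEqK_of_leK k as bs h)

/-- The profile of `i` restricted to positions below `P`, from the top downwards. -/
inductive IsProf (α : ℕ → ℕ) (i : ℕ) : ℕ → List ℕ → Prop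
  | nil (P : ℕ) : P ≤ i → IsProf α i P []
  | cons (P p : ℕ) (l : List ℕ) : i ≤ p → p < P →
      (∀ j, i ≤ j → j < P → j ≠ p → α p < α j) → IsProf α i p l → IsProf α i P (α p :: l)

/-- The chain list underlying `rpIdx`. -/
noncomputable def chainL (n : ℕ) (f : ℕ → ℕ) (m i : ℕ) : List ℕ :=
  ((List.range m).map (fun t => f^[t] i)).takeWhile (fun j => decide (1 ≤ j ∧ j ≤ n))

theorem chainL_succ (n : ℕ) (f : ℕ → ℕ) (m i : ℕ) :
    chainL n f (m + 1) i = if 1 ≤ i ∧ i ≤ n then i :: chainL n f m (f i) else [] := by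
  unfold chainL
  rw [List.range_succ_eq_map]
  simp only [List.map_cons, List.map_map, List.takeWhile_cons]
  by_cases h : 1 ≤ i ∧ i ≤ n <;> simp [Function.comp_def, h]

theorem chainL_zero (n : ℕ) (f : ℕ → ℕ) (m : ℕ) : chainL n f m 0 = [] := by
  rcases m with _ | m
  · simp [chainL]
  · rw [chainL_succ]; simp

theorem isProf_chain (n : ℕ) (α : ℕ → ℕ) (hinj : Set.InjOn α (Set.Icc 1 n)) (i0 : ℕ) (h0 : 1 ≤ i0) :
    ∀ m i acc, i0 ≤ i → i ≤ n → n + 1 ≤ m + i → IsProf α i0 i acc →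
      (∀ j, i0 ≤ j → j < i → α i < α j) →
      IsProf α i0 (n + 1) (((chainL n (up n α) m i).map α).reverse ++ acc) := by
  intro m
  induction m with
  | zero => intro i acc _ h2 h3; omega
  | succ m ih =>
    intro i acc h1 h2 h3 hp hmin
    rw [chainL_succ, if_pos ⟨by omega, h2⟩]
    have key : ∀ P, P ≤ n + 1 → (∀ j, i < j → j < P → ¬ α j < α i) → 
        ∀ j, i0 ≤ j → j < P → j ≠ i → α i < α j := by
      intro P hP hno j hj1 hj2 hj3
      rcases lt_or_gt_of_ne hj3 with h | h
      · exact hmin j hj1 h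
      · have := hno j h hj2
        have hne : α j ≠ α i := fun e => hj3 (hinj ⟨by omega, by omega⟩ ⟨by omega, h2⟩ e)
        omega
    by_cases hne : {k | i < k ∧ k ≤ n ∧ α k < α i}.Nonempty
    · obtain ⟨u1, u2, u3⟩ := Nat.sInf_mem hne
      change i < up n α i at u1
      change up n α i ≤ n at u2
      change α (up n α i) < α i at u3
      have hk := key (up n α i) (by omega) (by
        intro j hj1 hj2 hj3
        have : up n α i ≤ j := Nat.sInf_le ⟨hj1, by omega, hj3⟩
        omega)
      have := ih (up n α i) (α i :: acc) (by omega) u2 (by omega)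
        (IsProf.cons _ _ _ h1 u1 hk hp) (by
          intro j hj1 hj2
          by_cases hji : j = i
          · rw [hji]; exact u3
          · exact u3.trans (hk j hj1 hj2 hji))
      simpa using this
    · have hu : up n α i = 0 := by
        unfold up
        rw [Set.not_nonempty_iff_eq_empty.mp hne]; simp
      rw [hu, chainL_zero]
      have : IsProf α i0 (n + 1) (α i :: acc) := by
        refine IsProf.cons _ _ _ h1 (by omega) (key (n + 1) le_rfl ?_) hp
        intro j hj1 hj2 hj3
        exact hne ⟨j, hj1, by omega, hj3⟩
      simpa using this

theorem isProf_rpIdx (n : ℕ) (α : ℕ → ℕ) (hinj : Set.InjOn α (Set.Icc 1 n)) (i : ℕ)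
    (h0 : 1 ≤ i) (h1 : i ≤ n) : IsProf α i (n + 1) (rpIdx n α i) := by
  have := isProf_chain n α hinj i h0 (n + 1) i [] le_rfl h1 (by omega)
    (IsProf.nil _ le_rfl) (by intro j _ _; omega)
  simpa [chainL, rpIdx] using this

theorem leK_of_isProf (k i i' : ℕ) (α α' : ℕ → ℕ) (Rel : ℕ → ℕ → Prop)
    (H : ∀ P P', Rel P P' → ∀ p, i ≤ p → p < P →
      (α p < k → ∃ p', i' ≤ p' ∧ p' < P' ∧ α' p' = α p ∧ Rel p p') ∧
      (∃ p', i' ≤ p' ∧ p' < P' ∧ α' p' ≤ α p)) :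
    ∀ P L, IsProf α i P L → ∀ P' L', Rel P P' → IsProf α' i' P' L' → leK k L' L := by
  intro P L hL
  induction hL with
  | nil P h => intro P' L' _ _; cases L' <;> trivial
  | cons P p l h1 h2 h3 h4 ih =>
    intro P' L' hR hL'
    obtain ⟨Ha, p', q1, q2, q3⟩ := H P P' hR p h1 h2
    cases hL' with
    | nil _ h => omega
    | cons _ r l' r1 r2 r3 r4 =>
      have hle : α' r ≤ α p := by
        by_cases e : p' = r
        · rw [← e]; exact q3
        · exact (r3 p' q1 q2 e).le.trans q3
      rcases hle.lt_or_eq with h | h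
      · exact Or.inl h
      · refine Or.inr ⟨h, ?_⟩
        by_cases hk : α p < k
        · right
          obtain ⟨p2, s1, s2, s3, s4⟩ := Ha hk
          have : p2 = r := by
            by_contra e
            have := r3 p2 s1 s2 e
            omega
          subst this
          exact ih _ _ s4 r4
        · left; omega

theorem slice_idx_eq {Q : Type} (s : Slice Q) (hv : s.Valid) (q : Q) (i : ℕ) (h1 : 1 ≤ i)
    (h2 : i ≤ s.n) (hq : q ∈ s.S i) : s.idx q = i := by
  have hne : {i | 1 ≤ i ∧ i ≤ s.n ∧ q ∈ s.S i}.Nonempty := ⟨i, h1, h2, hq⟩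
  obtain ⟨a, b, c⟩ := Nat.sInf_mem hne
  change 1 ≤ s.idx q at a
  change s.idx q ≤ s.n at b
  change q ∈ s.S (s.idx q) at c
  by_contra e
  exact Set.disjoint_left.mp (hv.2.1 _ ⟨a, b⟩ _ ⟨h1, h2⟩ e) c hq

theorem mem_nextSet {Q Alp : Type} (A : NBA Q Alp) (X : Set Q) (x : Alp) (q : Q) :
    q ∈ A.nextSet X x ↔ ∃ p ∈ X, q ∈ A.delta p x := by
  simp [NBA.nextSet]

theorem mem_states {Q : Type} (s : Slice Q) (q : Q) :
    q ∈ s.states ↔ ∃ i, 1 ≤ i ∧ i ≤ s.n ∧ q ∈ s.S i := by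
  simp [Slice.states, and_assoc]

theorem exists_hat {Q Alp : Type} (A : NBA Q Alp) (s : Slice Q) (hv : s.Valid) (x : Alp)
    (q q' : Q) (i : ℕ) (h1 : 1 ≤ i) (h2 : i ≤ s.n) (hq : q ∈ s.S i) (hq' : q' ∈ A.delta q x) :
    ∃ j, 1 ≤ j ∧ j ≤ 2 * i ∧ q' ∈ hatS A s x j := by
  classical
  have hex : ∃ i, 1 ≤ i ∧ i ≤ s.n ∧ ∃ p ∈ s.S i, q' ∈ A.delta p x := ⟨i, h1, h2, q, hq, hq'⟩
  obtain ⟨a, b, p, hp, hpq⟩ := Nat.find_spec hex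
  have hle : Nat.find hex ≤ i := Nat.find_min' hex ⟨h1, h2, q, hq, hq'⟩
  have hmin := fun m => Nat.find_min (m := m) hex
  generalize Nat.find hex = i2 at *
  have hd : q' ∈ dTs A s (s.S i2) x := by
    simp only [dTs, Set.mem_iUnion]
    refine ⟨p, hp, hpq, ?_⟩
    rw [slice_idx_eq s hv p i2 a b hp, mem_nextSet]
    rintro ⟨p3, hp3, hp4⟩
    simp only [Set.mem_iUnion, Set.mem_Ico] at hp3
    obtain ⟨i3, hi3, hp5⟩ := hp3
    exact hmin i3 hi3.2 ⟨hi3.1, by omega, p3, hp5, hp4⟩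
  by_cases hF : q' ∈ A.F
  · refine ⟨2 * i2 - 1, by omega, by omega, ?_⟩
    unfold hatS
    rw [if_pos (by omega), show (2 * i2 - 1 + 1) / 2 = i2 by omega]
    exact ⟨hd, hF⟩
  · refine ⟨2 * i2, by omega, by omega, ?_⟩
    unfold hatS
    rw [if_neg (by omega), show (2 * i2) / 2 = i2 by omega]
    exact ⟨hd, hF⟩

theorem hat_sub {Q Alp : Type} (A : NBA Q Alp) (s : Slice Q) (x : Alp) (q' : Q) (j : ℕ)
    (h1 : 1 ≤ j) (h2 : j ≤ 2 * s.n) (h : q' ∈ hatS A s x j) : q' ∈ A.nextSet s.states x := by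
  have : ∃ i, 1 ≤ i ∧ i ≤ s.n ∧ q' ∈ dTs A s (s.S i) x := by
    unfold hatS at h
    split_ifs at h with hj
    · exact ⟨(j + 1) / 2, by omega, by omega, h.1⟩
    · exact ⟨j / 2, by omega, by omega, h.1⟩
  obtain ⟨i, a, b, c⟩ := this
  simp only [dTs, Set.mem_iUnion] at c
  obtain ⟨p, hp, hpq⟩ := c
  rw [mem_nextSet]
  exact ⟨p, (mem_states _ _).2 ⟨i, a, b, hp⟩, hpq.1⟩

theorem interval_cover (b : ℕ → ℕ) (h0 : b 0 = 0) (l : ℕ) (hl : 1 ≤ l) :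
    ∀ n, l ≤ b n → ∃ y, 1 ≤ y ∧ y ≤ n ∧ b (y - 1) + 1 ≤ l ∧ l ≤ b y := by
  intro n
  induction n with
  | zero => intro h; omega
  | succ n ih =>
    intro h
    by_cases h2 : l ≤ b n
    · obtain ⟨y, a, c, d⟩ := ih h2
      exact ⟨y, a, by omega, d⟩
    · exact ⟨n + 1, by omega, le_rfl, by simp; omega, h⟩

theorem prune_half {Q Alp : Type} {A : NBA Q Alp} {s : Slice Q} {x : Alp} {nt nt2 : ℕ}
    {xs xs2 : ℕ → ℕ} (h : IsPrune A s x nt xs) (h2 : IsPrune A s x nt2 xs2) (i : ℕ) (hi : 1 ≤ i)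
    (hi2 : i ≤ nt) (hag : ∀ j, 1 ≤ j → j < i → xs j = xs2 j) : i ≤ nt2 ∧ xs2 i ≤ xs i := by
  obtain ⟨a, c⟩ := h.2.1 i ⟨hi, hi2⟩
  obtain ⟨j, hj, e⟩ := h2.2.2.1 _ a c
  have hij : i ≤ j := by
    by_contra hlt
    push Not at hlt
    have e2 := hag j hj.1 hlt
    have := h.1 ⟨hj.1, by omega⟩ ⟨hi, hi2⟩ hlt
    omega
  have hj2 := hj.2
  refine ⟨by omega, ?_⟩
  rw [← e]
  exact h2.1.monotoneOn ⟨hi, by omega⟩ hj hij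

theorem prune_unique {Q Alp : Type} {A : NBA Q Alp} {s : Slice Q} {x : Alp} {nt nt2 : ℕ}
    {xs xs2 : ℕ → ℕ} (h : IsPrune A s x nt xs) (h2 : IsPrune A s x nt2 xs2) :
    nt = nt2 ∧ ∀ i, 1 ≤ i → i ≤ nt + 1 → xs i = xs2 i := by
  have key : ∀ i, 1 ≤ i → i ≤ nt → i ≤ nt2 ∧ xs i = xs2 i := by
    intro i
    induction i using Nat.strong_induction_on with
    | _ i ih =>
      intro h1 h3
      have hag : ∀ j, 1 ≤ j → j < i → xs j = xs2 j := fun j a b => (ih j b a (by omega)).2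
      obtain ⟨a, b⟩ := prune_half h h2 i h1 h3 hag
      obtain ⟨c, d⟩ := prune_half h2 h i h1 a (fun j p q => (hag j p q).symm)
      exact ⟨a, by omega⟩
  have hle : nt ≤ nt2 := by
    rcases Nat.eq_zero_or_pos nt with h0 | h0
    · omega
    · exact (key nt h0 le_rfl).1
  have hge : nt2 ≤ nt := by
    by_contra hlt
    push Not at hlt
    have := prune_half h2 h (nt + 1) (by omega) (by omega)
      (fun j a b => ((key j a (by omega)).2).symm)
    omega
  have heq : nt = nt2 := le_antisymm hle hge
  refine ⟨heq, fun i a b => ?_⟩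
  by_cases hi : i ≤ nt
  · exact (key i a hi).2
  · have : i = nt + 1 := by omega
    subst this
    rw [h.2.2.2, heq, h2.2.2.2]

theorem tilde_congr {Q : Type} (s : Slice Q) (xs xs2 : ℕ → ℕ) (i : ℕ) (h : xs i = xs2 i)
    (h' : xs (i + 1) = xs2 (i + 1)) : tildeRk s xs i = tildeRk s xs2 i := by
  unfold tildeRk
  rw [h, h']

theorem prune_sets {Q Alp : Type} {A : NBA Q Alp} {s : Slice Q} {x : Alp} {nt nt2 : ℕ}
    {xs xs2 : ℕ → ℕ} (h : IsPrune A s x nt xs) (h2 : IsPrune A s x nt2 xs2) :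
    greenSet A s x nt xs = greenSet A s x nt2 xs2 ∧ redSet s nt xs = redSet s nt2 xs2 := by
  obtain ⟨rfl, hx⟩ := prune_unique h h2
  have ht : ∀ r, (∃ i ∈ Set.Icc 1 nt, tildeRk s xs i = r) ↔
      (∃ i ∈ Set.Icc 1 nt, tildeRk s xs2 i = r) := by
    intro r
    apply exists_congr
    intro i
    apply and_congr_right
    rintro ⟨a, b⟩
    rw [tilde_congr s xs xs2 i (hx i a (by omega)) (hx _ (by omega) (by omega))]
  constructor
  · ext r; simp only [greenSet, Set.mem_ofPred_eq, ht]
  · ext r; simp only [redSet, Set.mem_ofPred_eq, ht]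

theorem not_active {G R : Set ℕ} {c r : ℕ} (h : r < domRank G R c) : r ∉ G ∧ r ∉ R := by
  unfold domRank at h
  split_ifs at h with hne
  · have := Nat.notMem_of_lt_sInf h
    exact ⟨fun a => this (Or.inl a), fun a => this (Or.inr a)⟩
  · exact ⟨fun a => hne ⟨r, Or.inl a⟩, fun a => hne ⟨r, Or.inr a⟩⟩

theorem prune_lt_succ {Q Alp : Type} {A : NBA Q Alp} {s : Slice Q} {x : Alp} {nt : ℕ}
    {xs : ℕ → ℕ} (h : IsPrune A s x nt xs) : StrictMonoOn xs (Set.Icc 1 (nt + 1)) := by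
  intro a ha b hb hab
  have ha1 := ha.1
  have hb2 := hb.2
  by_cases hbn : b ≤ nt
  · exact h.1 ⟨ha1, by omega⟩ ⟨by omega, hbn⟩ hab
  · have : b = nt + 1 := by omega
    subst this
    rw [h.2.2.2]
    have := (h.2.1 a ⟨ha1, by omega⟩).1.2
    omega

theorem tilde_attained {Q Alp : Type} {A : NBA Q Alp} {s : Slice Q} {x : Alp} {nt : ℕ}
    {xs : ℕ → ℕ} (h : IsPrune A s x nt xs) (l : ℕ) (h1 : 1 ≤ l) (h2 : l ≤ nt) :
    ∃ j, xs l ≤ j ∧ j < xs (l + 1) ∧ 1 ≤ j ∧ j ≤ 2 * s.n ∧ hatRk s j = tildeRk s xs l := by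
  have hm := prune_lt_succ h
  have hlt : xs l < xs (l + 1) := hm ⟨h1, by omega⟩ ⟨by omega, by omega⟩ (by omega)
  have hne : (hatRk s '' {j | xs l ≤ j ∧ j < xs (l + 1)}).Nonempty :=
    ⟨_, xs l, ⟨le_rfl, hlt⟩, rfl⟩
  obtain ⟨j, ⟨a, b⟩, e⟩ := Nat.sInf_mem hne
  have h3 := (h.2.1 l ⟨h1, h2⟩).1.1
  have h4 : xs (l + 1) ≤ xs (nt + 1) :=
    hm.monotoneOn ⟨by omega, by omega⟩ ⟨by omega, le_rfl⟩ (by omega)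
  rw [h.2.2.2] at h4
  exact ⟨j, a, b, by omega, by omega, e⟩

theorem hatRk_even {Q : Type} (s : Slice Q) (j : ℕ) (h : hatRk s j ≤ s.n) :
    j % 2 = 0 ∧ hatRk s j = s.rk (j / 2) := by
  unfold hatRk at h ⊢
  split_ifs at h ⊢ with hj
  · omega
  · exact ⟨by omega, rfl⟩

theorem trans_a {Q Alp : Type} [Fintype Q] (A : NBA Q Alp) (s s' : Slice Q) (x : Alp) (pr : ℕ)
    (hv : s.Valid) (h : UnifiedTrans A s x s' pr) :
    s'.states = A.nextSet s.states x := by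
  obtain ⟨nt, xs, n', b, hp, hb, -, -, hn, hS, -, -⟩ := h
  ext q'
  rw [mem_states]
  constructor
  · rintro ⟨y, h1, h2, h3⟩
    rw [hn] at h2
    rw [hS y ⟨h1, h2⟩] at h3
    simp only [Set.mem_iUnion] at h3
    obtain ⟨l, ⟨hl1, hl2⟩, h3⟩ := h3
    have hbn : b y ≤ b n' := hb.2.2.monotoneOn ⟨by omega, h2⟩ ⟨by omega, le_rfl⟩ h2
    rw [hb.2.1] at hbn
    have := (hp.2.1 l ⟨by omega, by omega⟩).1
    exact hat_sub A s x q' (xs l) this.1 this.2 h3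
  · rw [mem_nextSet]
    rintro ⟨q, hq, hqq⟩
    obtain ⟨i, h1, h2, hq⟩ := (mem_states _ _).1 hq
    obtain ⟨j, j1, j2, hj⟩ := exists_hat A s hv x q q' i h1 h2 hq hqq
    obtain ⟨l, ⟨l1, l2⟩, rfl⟩ := hp.2.2.1 j ⟨j1, by omega⟩ ⟨q', hj⟩
    obtain ⟨y, y1, y2, y3, y4⟩ := interval_cover b hb.1 l l1 n' (by rw [hb.2.1]; exact l2)
    refine ⟨y, y1, by omega, ?_⟩
    rw [hS y ⟨y1, y2⟩]
    simp only [Set.mem_iUnion]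
    exact ⟨l, ⟨y3, y4⟩, hj⟩

theorem trans_b {Q Alp : Type} [Fintype Q] (A : NBA Q Alp) (s s' : Slice Q) (x : Alp) (pr : ℕ)
    (hv : s.Valid) (nt : ℕ) (xs : ℕ → ℕ) (n' : ℕ) (b : ℕ → ℕ)
    (h : TransVia A s x s' pr nt xs n' b) (k : ℕ)
    (hk : k = domRank (greenSet A s x nt xs) (redSet s nt xs) (Fintype.card Q)) (q q' : Q)
    (hq : q ∈ s.states) (hqq : q' ∈ A.delta q x) : precEqK k (s'.rp q') (s.rp q) := by
  obtain ⟨hp, hb, hM, -, hn, hS, hv', hord⟩ := h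
  rw [← hk] at hM
  have hmono := prune_lt_succ hp
  have hbm : MonotoneOn b (Set.Icc 0 n') := hb.2.2.monotoneOn
  have hbn : ∀ y, y ≤ n' → b y ≤ nt := by
    intro y hy
    have := hbm ⟨by omega, hy⟩ ⟨by omega, le_rfl⟩ hy
    rwa [hb.2.1] at this
  have hblt : ∀ y, 1 ≤ y → y ≤ n' → b (y - 1) + 1 ≤ b y := by
    intro y h1 h2
    exact hb.2.2 ⟨by omega, by omega⟩ ⟨by omega, h2⟩ (by omega)
  have hbl : ∀ y z, y < z → z ≤ n' → b y ≤ b (z - 1) := by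
    intro y z h1 h2
    exact hbm ⟨by omega, by omega⟩ ⟨by omega, by omega⟩ (by omega)
  have hxs : ∀ l l', 1 ≤ l → l < l' → l' ≤ nt + 1 → xs l < xs l' :=
    fun l l' h1 h2 h3 => hmono ⟨h1, by omega⟩ ⟨by omega, h3⟩ h2
  have hrk := hv.2.2.1
  have hrk' := hv'.2.2.1
  rw [hn] at hrk'
  -- the merged ranking
  obtain ⟨ac, hac⟩ : ∃ ac : ℕ → ℕ, ∀ y,
    ac y = sInf (tildeRk s xs '' Set.Icc (b (y - 1) + 1) (b y)) := ⟨_, fun _ => rfl⟩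
  simp only [← hac] at hord
  have hatt : ∀ y, 1 ≤ y → y ≤ n' → ∃ l, b (y - 1) + 1 ≤ l ∧ l ≤ b y ∧ tildeRk s xs l = ac y := by
    intro y h1 h2
    have hne : (tildeRk s xs '' Set.Icc (b (y - 1) + 1) (b y)).Nonempty :=
      ⟨_, b y, ⟨hblt y h1 h2, le_rfl⟩, rfl⟩
    obtain ⟨l, hl, e⟩ := Nat.sInf_mem hne
    exact ⟨l, hl.1, hl.2, by rw [hac]; exact e⟩
  have hacle : ∀ y l, b (y - 1) + 1 ≤ l → l ≤ b y → ac y ≤ tildeRk s xs l := by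
    intro y l h1 h2
    rw [hac]
    exact Nat.sInf_le ⟨l, ⟨h1, h2⟩, rfl⟩
  have hatpos : ∀ j, 1 ≤ j → j ≤ 2 * s.n → 1 ≤ hatRk s j := by
    intro j h1 h2
    unfold hatRk
    split_ifs
    · omega
    · exact (hrk.mapsTo (x := j / 2) ⟨by omega, by omega⟩).1
  have hacpos : ∀ y, 1 ≤ y → y ≤ n' → 1 ≤ ac y := by
    intro y h1 h2
    obtain ⟨l, l1, l2, e⟩ := hatt y h1 h2
    obtain ⟨j, -, -, j1, j2, e2⟩ := tilde_attained hp l (by omega) (l2.trans (hbn y h2))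
    rw [← e, ← e2]
    exact hatpos j j1 j2
  have htinj : ∀ l l', 1 ≤ l → l < l' → l' ≤ nt → tildeRk s xs l ≤ s.n →
      tildeRk s xs l ≠ tildeRk s xs l' := by
    intro l l' h1 h2 h3 h4 e
    obtain ⟨j, a1, a2, a3, a4, a5⟩ := tilde_attained hp l h1 (by omega)
    obtain ⟨j', c1, c2, c3, c4, c5⟩ := tilde_attained hp l' (by omega) h3
    obtain ⟨d1, d2⟩ := hatRk_even s j (by omega)
    obtain ⟨e1, e2⟩ := hatRk_even s j' (by omega)
    have := hrk.injOn (x₁ := j / 2) (x₂ := j' / 2) ⟨by omega, by omega⟩ ⟨by omega, by omega⟩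
      (by omega)
    have : xs (l + 1) ≤ xs l' := hmono.monotoneOn ⟨by omega, by omega⟩ ⟨by omega, by omega⟩ h2
    omega
  have hacinj : ∀ y z, 1 ≤ y → y < z → z ≤ n' → ac y ≤ s.n → ac y ≠ ac z := by
    intro y z h1 h2 h3 h4 e
    obtain ⟨l, a1, a2, a3⟩ := hatt y h1 (by omega)
    obtain ⟨l', c1, c2, c3⟩ := hatt z (by omega) h3
    have h5 := hbl y z h2 h3
    have h6 := hbn z h3
    exact htinj l l' (by omega) (by omega) (by omega) (by omega) (by omega)
  have hacinj2 : ∀ y z, 1 ≤ y → y ≤ n' → 1 ≤ z → z ≤ n' → y ≠ z → ac y ≤ s.n → ac y ≠ ac z := by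
    intro y z h1 h2 h3 h4 h5 h6 e
    rcases lt_or_gt_of_ne h5 with h | h
    · exact hacinj y z h1 h h4 h6 e
    · exact hacinj z y h3 h h2 (by omega) e.symm
  -- ranks do not increase
  have F4 : ∀ v y, 1 ≤ y → y ≤ n' → s'.rk y = v → ac y ≤ s.n → v ≤ ac y := by
    intro v
    induction v with
    | zero => intro y _ _ _ _; omega
    | succ v ih =>
      intro y h1 h2 h3 h4
      rcases Nat.eq_zero_or_pos v with h0 | h0
      · have := hacpos y h1 h2; omega
      · have hvn := (hrk'.mapsTo (x := y) ⟨h1, h2⟩).2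
        obtain ⟨z, hz, e⟩ := hrk'.surjOn (a := v) ⟨h0, by omega⟩
        have hz1 := hz.1
        have hz2 := hz.2
        have hle : ac z ≤ ac y := by
          by_contra hlt
          have := hord y ⟨h1, h2⟩ z hz (by omega)
          omega
        have hne : ac y ≠ ac z :=
          hacinj2 y z h1 h2 hz1 hz2 (by rintro rfl; omega) h4
        have := ih z hz1 hz2 e (by omega)
        omega
  -- small ranks survive
  have F1 : ∀ p, 1 ≤ p → p ≤ s.n → s.rk p < k →
      ∃ l, 1 ≤ l ∧ l ≤ nt ∧ xs l = 2 * p ∧ tildeRk s xs l = s.rk p := by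
    intro p h1 h2 h3
    rw [hk] at h3
    obtain ⟨hG, hR⟩ := not_active h3
    have hh : hatRk s (2 * p) = s.rk p := by
      unfold hatRk
      rw [if_neg (by omega), show 2 * p / 2 = p by omega]
    have hl : ∃ i ∈ Set.Icc 1 nt, tildeRk s xs i = s.rk p := by
      by_contra hno
      exact hR ⟨⟨2 * p, ⟨by omega, by omega⟩, hh⟩, hno⟩
    have hne : (hatS A s x (2 * p)).Nonempty := by
      by_contra hno
      exact hG ⟨hl, 2 * p, ⟨by omega, by omega⟩, Set.not_nonempty_iff_eq_empty.mp hno, hh⟩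
    obtain ⟨l, ⟨l1, l2⟩, e⟩ := hl
    obtain ⟨i, ⟨i1, i2⟩, e2⟩ := hp.2.2.1 (2 * p) ⟨by omega, by omega⟩ hne
    obtain ⟨j, a1, a2, a3, a4, a5⟩ := tilde_attained hp l l1 l2
    have hrp := (hrk.mapsTo (x := p) ⟨h1, h2⟩).2
    obtain ⟨d1, d2⟩ := hatRk_even s j (by omega)
    have := hrk.injOn (x₁ := j / 2) (x₂ := p) ⟨by omega, by omega⟩ ⟨by omega, by omega⟩
      (by omega)
    have hil : i = l := by
      rcases lt_trichotomy i l with h | h | h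
      · have := hxs i l i1 h (by omega); omega
      · exact h
      · have : xs (l + 1) ≤ xs i := hmono.monotoneOn ⟨by omega, by omega⟩ ⟨by omega, by omega⟩ h
        omega
    subst hil
    exact ⟨i, i1, i2, e2, e⟩
  -- positions of small ranks
  have F2 : ∀ p, 1 ≤ p → p ≤ s.n → s.rk p < k →
      ∃ y, 1 ≤ y ∧ y ≤ n' ∧ b y = b (y - 1) + 1 ∧ xs (b y) = 2 * p ∧ ac y = s.rk p := by
    intro p h1 h2 h3
    obtain ⟨l, l1, l2, l3, l4⟩ := F1 p h1 h2 h3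
    obtain ⟨y, y1, y2, y3, y4⟩ := interval_cover b hb.1 l l1 n' (by rw [hb.2.1]; exact l2)
    have := (hM y ⟨y1, y2⟩ l ⟨y3, y4⟩).1 (by omega)
    have hlb : l = b y := by omega
    obtain ⟨l', a1, a2, a3⟩ := hatt y y1 y2
    have : l' = l := by omega
    subst this
    exact ⟨y, y1, y2, by omega, by rw [← hlb]; exact l3, by omega⟩
  have F5 : ∀ r p y, 1 ≤ p → p ≤ s.n → s.rk p < k → s.rk p = r → 1 ≤ y → y ≤ n' →
      ac y = s.rk p → r ≤ s'.rk y := by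
    intro r
    induction r with
    | zero => intros; omega
    | succ r ih =>
      intro p y h1 h2 h3 h4 h5 h6 h7
      have hpos := (hrk'.mapsTo (x := y) ⟨h5, h6⟩).1
      rcases Nat.eq_zero_or_pos r with h0 | h0
      · omega
      · have hrn := (hrk.mapsTo (x := p) ⟨h1, h2⟩).2
        obtain ⟨p2, ⟨c1, c2⟩, e⟩ := hrk.surjOn (a := r) ⟨h0, by omega⟩
        obtain ⟨y2, d1, d2, -, -, d5⟩ := F2 p2 c1 c2 (by omega)
        have := ih p2 y2 c1 c2 (by omega) e d1 d2 d5
        have := hord y2 ⟨d1, d2⟩ y ⟨h5, h6⟩ (by omega)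
        omega
  -- locate the states
  obtain ⟨i, i1, i2, hqi⟩ := (mem_states _ _).1 hq
  obtain ⟨j, j1, j2, hj⟩ := exists_hat A s hv x q q' i i1 i2 hqi hqq
  obtain ⟨l0, ⟨l01, l02⟩, hl0⟩ := hp.2.2.1 j ⟨j1, by omega⟩ ⟨q', hj⟩
  obtain ⟨i', y1, y2, y3, y4⟩ := interval_cover b hb.1 l0 l01 n' (by rw [hb.2.1]; exact l02)
  have hq'i : q' ∈ s'.S i' := by
    rw [hS i' ⟨y1, y2⟩]
    simp only [Set.mem_iUnion]
    exact ⟨l0, ⟨y3, y4⟩, by rw [hl0]; exact hj⟩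
  have hi' : s'.idx q' = i' := slice_idx_eq s' hv' q' i' y1 (by omega) hq'i
  have hi : s.idx q = i := slice_idx_eq s hv q i i1 i2 hqi
  apply precEqK_of_leK
  unfold Slice.rp
  rw [hi, hi', hn]
  -- an interval whose maximum is at least `l0` is not left of `i'`
  have hright : ∀ l y, l0 ≤ l → y ≤ n' → l ≤ b y → i' ≤ y := by
    intro l y h1 h2 h3
    by_contra hlt
    have := hbl y i' (by omega) y2
    omega
  refine leK_of_isProf k i i' s.rk s'.rk (fun P P' => (P = s.n + 1 ∧ P' = n' + 1) ∨
    (1 ≤ P ∧ P ≤ s.n ∧ 1 ≤ P' ∧ P' ≤ n' ∧ b P' = b (P' - 1) + 1 ∧ xs (b P') = 2 * P)) ?_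
    (s.n + 1) _ (isProf_rpIdx s.n s.rk hrk.injOn i i1 i2) (n' + 1) _ (Or.inl ⟨rfl, rfl⟩)
    (isProf_rpIdx n' s'.rk hrk'.injOn i' y1 y2)
  intro P P' hR p hip hpP
  have hPn : p ≤ s.n := by rcases hR with hR | hR <;> omega
  -- positions left of `P` are mapped left of `P'`
  have hleft : ∀ l y, 1 ≤ l → l ≤ nt → 1 ≤ y → y ≤ n' → b (y - 1) + 1 ≤ l → l ≤ b y → xs l ≤ 2 * p →
      y < P' := by
    intro l y h1 h2 h3 h4 h5 h6 h7
    rcases hR with hR | ⟨r1, r2, r3, r4, r5, r6⟩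
    · omega
    · by_contra hge
      have hll : b P' ≤ l := by
        by_cases e : P' = y
        · subst e; omega
        · have := hbl P' y (by omega) h4
          omega
      have : xs (b P') ≤ xs l := hmono.monotoneOn ⟨by omega, by omega⟩ ⟨by omega, by omega⟩ hll
      omega
  constructor
  · intro hlt
    obtain ⟨y, a1, a2, a3, a4, a5⟩ := F2 p (by omega) hPn hlt
    have hyn := hbn y a2
    have hrn := (hrk.mapsTo (x := p) ⟨by omega, hPn⟩).2
    refine ⟨y, ?_, ?_, ?_, ?_⟩
    · apply hright (b y) y _ a2 le_rfl
      by_contra hlt2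
      have := hxs (b y) l0 (by omega) (by omega) (by omega)
      omega
    · exact hleft (b y) y (by omega) hyn a1 a2 (by omega) le_rfl (by omega)
    · apply le_antisymm
      · rw [← a5]; exact F4 _ y a1 a2 rfl (by omega)
      · exact F5 _ p y (by omega) hPn hlt rfl a1 a2 a5
    · right
      exact ⟨by omega, hPn, a1, a2, a3, a4⟩
  · -- the block containing `2 p`
    have hblock : ∃ l, l0 ≤ l ∧ l ≤ nt ∧ xs l ≤ 2 * p ∧ 2 * p < xs (l + 1) := by
      by_contra hno
      push Not at hno
      have : ∀ d, l0 + d ≤ nt + 1 → xs (l0 + d) ≤ 2 * p := by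
        intro d
        induction d with
        | zero => intro _; simp; omega
        | succ d ih =>
          intro hd
          exact hno (l0 + d) (by omega) (by omega) (ih (by omega))
      have h2 := this (nt + 1 - l0) (by omega)
      rw [show l0 + (nt + 1 - l0) = nt + 1 by omega, hp.2.2.2] at h2
      omega
    obtain ⟨l, b1, b2, b3, b4⟩ := hblock
    obtain ⟨y, c1, c2, c3, c4⟩ := interval_cover b hb.1 l (by omega) n' (by rw [hb.2.1]; exact b2)
    have hh : hatRk s (2 * p) = s.rk p := by
      unfold hatRk
      rw [if_neg (by omega), show 2 * p / 2 = p by omega]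
    have ht : tildeRk s xs l ≤ s.rk p := by
      rw [← hh]
      exact Nat.sInf_le ⟨2 * p, ⟨b3, b4⟩, rfl⟩
    have hac2 := hacle y l c3 c4
    have hrn := (hrk.mapsTo (x := p) ⟨by omega, hPn⟩).2
    refine ⟨y, hright l y b1 c2 c4, hleft l y (by omega) b2 c1 c2 c3 c4 b3, ?_⟩
    have := F4 _ y c1 c2 rfl (by omega)
    omega

theorem run_reachable {Q Alp : Type} (B : TDPA Q Alp) (w : ℕ → Alp) (i : ℕ) :
    B.Reachable (B.run w i) := by
  induction i with
  | zero => exact ⟨[], rfl⟩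
  | succ i ih =>
    obtain ⟨l, hl⟩ := ih
    refine ⟨l ++ [w i], ?_⟩
    rw [List.foldl_append, hl]
    rfl

theorem run_valid {Q Alp : Type} [Fintype Q] (A : NBA Q Alp)
    (hQ0 : A.Q0.Nonempty) (B : TDPA (Slice Q) Alp) (hB : ObtainedUnified A B)
    (w : ℕ → Alp) (i : ℕ) : (B.run w i).Valid := by
  rcases i with _ | i
  · change B.p0.Valid
    obtain ⟨h1, h2, h3, -⟩ := hB
    refine ⟨?_, ?_, ?_, ?_⟩
    · intro i hi
      have : i = 1 := by have := hi.1; have := hi.2; omega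
      rw [this, h2]; exact hQ0
    · intro i hi j hj hne
      have := hi.1; have := hi.2; have := hj.1; have := hj.2
      omega
    · rw [h1]
      simp [h3]
    · intro _
      rw [h1, h3]
  · obtain ⟨nt, xs, n', b, h⟩ := hB.2.2.2 _ (run_reachable B w i) (w i)
    exact h.2.2.2.2.2.2.1

end Helpers

/-- Along the run `(αᵢ, tᵢ)` of a TDPA `B` obtained from the unified
construction on `w`, with `kᵢ` the dominating rank of the transition taken at time `i`:
(a) `Q_{t_{i+1}} = Δ(Q_{tᵢ}, w i)`; and (b) every run `q` of `A` on `w` satisfies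
`q i ∈ Q_{tᵢ}` and `rp(q (i+1)) ≼_{kᵢ} rp(q i)` for all `i`. -/
theorem runs_tracked_and_profiles_decrease {Q Alp : Type} [Fintype Q] (A : NBA Q Alp)
    (hQ0 : A.Q0.Nonempty) (B : TDPA (Slice Q) Alp) (hB : ObtainedUnified A B)
    (w : ℕ → Alp) (k : ℕ → ℕ)
    (hk : ∀ i, ∃ nt xs, IsPrune A (B.run w i) (w i) nt xs ∧
      k i = domRank (greenSet A (B.run w i) (w i) nt xs)
        (redSet (B.run w i) nt xs) (Fintype.card Q)) :
    (∀ i, (B.run w (i + 1)).states = A.nextSet (B.run w i).states (w i)) ∧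
    (∀ q : ℕ → Q, A.IsRun w q →
      (∀ i, q i ∈ (B.run w i).states) ∧
      (∀ i, precEqK (k i) ((B.run w (i + 1)).rp (q (i + 1)))
        ((B.run w i).rp (q i)))) := by
  have hT : ∀ i, UnifiedTrans A (B.run w i) (w i) (B.run w (i + 1)) (B.c (B.run w i) (w i)) :=
    fun i => hB.2.2.2 _ (run_reachable B w i) (w i)
  have hV := run_valid A hQ0 B hB w
  have ha : ∀ i, (B.run w (i + 1)).states = A.nextSet (B.run w i).states (w i) :=
    fun i => trans_a A _ _ _ _ (hV i) (hT i)
  refine ⟨ha, fun q hq => ?_⟩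
  have hmem : ∀ i, q i ∈ (B.run w i).states := by
    intro i
    induction i with
    | zero =>
      rw [mem_states]
      refine ⟨1, le_rfl, ?_, ?_⟩
      · exact hB.1.ge
      · change q 0 ∈ B.p0.S 1
        rw [hB.2.1]; exact hq.1
    | succ i ih =>
      rw [ha, mem_nextSet]
      exact ⟨q i, ih, hq.2 i⟩
  refine ⟨hmem, fun i => ?_⟩
  obtain ⟨nt, xs, n', b, h⟩ := hT i
  obtain ⟨nt2, xs2, hp2, hk2⟩ := hk i
  obtain ⟨e1, e2⟩ := prune_sets hp2 h.1
  rw [e1, e2] at hk2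
  exact trans_b A _ _ _ _ (hV i) nt xs n' b h (k i) hk2 (q i) (q (i + 1)) (hmem i) (hq.2 i)
end
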